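/- Let R be an integral domain that is a finitely generated ℂ-algebra, equipped with ℂ-linear derivations δ₁, …, δ_m : R → R (not assumed to commute). Suppose there are infinitely many prime ideals P of R of height one such that δᵢ(x) ∈ P for every x ∈ P and every i = 1, …, m (i.e., infinitely many height one prime differential ideals). Then there exist a, b ∈ R with b ≠ 0 such that δᵢ(a)·b = a·δᵢ(b) for every i = 1, …, m, and there is no c ∈ ℂ with a = c·b. (Equivalently: the element f = a/b of the fraction field Frac(R) lies outside ℂ and satisfies δᵢ(f) = 0 for all i, where δᵢ denotes the unique extension of δᵢ to Frac(R).) -/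

import Mathlib

/-!
Write `K = Frac R` and suppose that the derivations have no constants in `K` outside `k`. By Noether
normalization `R` is finite over a polynomial ring `A = k[x₁, …, xₙ]`, and `K = Frac A (z)` for some
`z ∈ R`. All but finitely many height one primes `P` avoid a fixed common denominator `D ∈ A`, and
`P ∩ A = (f)` for a prime `f`. To such a differential prime `P` one attaches a one-form `ω` over `K`
with at most a simple pole along `f = 0`, which near the generic point of `P` is `df / f` up to a
regular form and which is regular along the other primes over `(f)`. It is obtained by lifting from
the residue field of `f` the products of `df` with the coefficients of a polynomial in `z`; these
coefficients are traces, and Euler's formula together with the homogeneity of traces with respect to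
the degree filtration bounds the degree of the lifts by `deg f` plus a constant independent of `P`.

Since `P` is differential, the Lie derivatives of `ω` along the derivations have no pole along
`f = 0`, so that after multiplication by `D` they lie in a finite-dimensional `k`-space which does
not depend on `P`. Forms killed by all Lie derivatives and independent over the constants are
independent over `K`; hence the forms whose Lie derivatives lie in a given finite-dimensional space
form a finite-dimensional space themselves. As the forms `ω` attached to distinct ideals `(f)` have
distinct poles, they are linearly independent over `k`, and there are only finitely many of them.
-/

namespace DifferentialPrime

open Polynomial

section Horizontal

variable {k K V J : Type*} [Field k] [Field K] [Algebra k K] [AddCommGroup V] [Module K V]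
  [Module k V] [IsScalarTower k K V] {δ : J → Derivation k K K}

theorem linearIndependent_of_horizontal {ι : Type*}
    (hconst : ∀ x : K, (∀ j, δ j x = 0) → ∃ c : k, x = algebraMap k K c) {L : J → V →ₗ[k] V}
    (hL : ∀ j (c : K) v, L j (c • v) = δ j c • v + c • L j v) {X : ι → V}
    (hX : ∀ j i, L j (X i) = 0) (hind : LinearIndependent k X) : LinearIndependent K X := by
  classical
  rw [linearIndependent_iff']
  intro s
  induction s using Finset.induction_on with
  | empty => simp only [Finset.notMem_empty, IsEmpty.forall_iff, implies_true]
  | insert a s ha ih =>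
    intro g hg
    suffices hga : g a = 0 by
      rw [Finset.sum_insert ha, hga, zero_smul, zero_add] at hg
      exact Finset.forall_mem_insert _ _ _ |>.2 ⟨hga, ih g hg⟩
    by_contra hne
    -- Differentiating a relation normalised at `a` gives a shorter one, so its coefficients are
    -- constants.
    let c : ι → K := fun i => (g a)⁻¹ * g i
    have hca : c a = 1 := inv_mul_cancel₀ hne
    have hsum : ∑ i ∈ insert a s, c i • X i = 0 := by
      simp only [c, mul_smul, ← Finset.smul_sum, hg, smul_zero]
    have hderiv (j : J) : ∀ i ∈ s, δ j (c i) = 0 := by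
      have h := congrArg (L j) hsum
      simp only [map_sum, map_zero, hL, hX, smul_zero, add_zero] at h
      rw [Finset.sum_insert ha, hca, Derivation.map_one_eq_zero, zero_smul, zero_add] at h
      exact ih _ h
    have hconst_coeff : ∀ i ∈ insert a s, ∃ d : k, c i = algebraMap k K d :=
      Finset.forall_mem_insert _ _ _ |>.2
        ⟨⟨1, by rw [hca, map_one]⟩, fun i hi => hconst _ fun j => hderiv j i hi⟩
    choose! d hd using hconst_coeff
    have hda : d a = 0 := linearIndependent_iff'.1 hind (insert a s) d
      (by rw [← hsum]; exact Finset.sum_congr rfl fun i hi => by rw [hd i hi, algebraMap_smul])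
      a (Finset.mem_insert_self _ _)
    have := hd a (Finset.mem_insert_self _ _)
    rw [hda, hca, map_zero] at this
    exact one_ne_zero this

theorem finiteDimensional_iInf_comap [Finite J] [FiniteDimensional K V]
    (hconst : ∀ x : K, (∀ j, δ j x = 0) → ∃ c : k, x = algebraMap k K c) {L : J → V →ₗ[k] V}
    (hL : ∀ j (c : K) v, L j (c • v) = δ j c • v + c • L j v)
    (G : Submodule k V) [FiniteDimensional k G] :
    FiniteDimensional k ↥(⨅ j, G.comap (L j)) := by
  have hker : (LinearMap.ker (LinearMap.pi L)).FG := by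
    let b := Module.Free.chooseBasis k (LinearMap.ker (LinearMap.pi L))
    have hb := linearIndependent_of_horizontal hconst hL (X := fun i => (b i : V))
      (fun j i => congrFun (LinearMap.mem_ker.1 (b i).2) j)
      (b.linearIndependent.map' _ (Submodule.ker_subtype _))
    have := hb.finite
    exact Module.Finite.iff_fg.1 (Module.Finite.of_basis b)
  have hmap : (⨅ j, G.comap (L j)).map (LinearMap.pi L) ≤ Submodule.pi Set.univ fun _ => G :=
    Submodule.map_le_iff_le_comap.2 fun v hv j _ => (Submodule.mem_iInf _).1 hv j
  have hpi : (Submodule.pi Set.univ fun _ : J => G).FG :=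
    Submodule.fg_pi fun _ => Module.Finite.iff_fg.1 inferInstance
  exact Module.Finite.iff_fg.2
    (Submodule.fg_of_fg_map_of_fg_inf_ker _ (hpi.of_le hmap) (hker.of_le inf_le_right))

end Horizontal

section DegreeOfIntegralElements

variable (k σ : Type*) [Field k]

/-- The Rees ring `⨁ᵢ {degree ≤ i} Tⁱ` of the filtration of a polynomial ring by total degree. -/
def reesSubring : Subring (MvPolynomial σ k)[X] where
  carrier := {p | ∀ i, (p.coeff i).totalDegree ≤ i}
  zero_mem' i := by simp only [coeff_zero, MvPolynomial.totalDegree_zero, zero_le]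
  one_mem' i := by rw [coeff_one]; split_ifs <;> simp
  add_mem' hp hq i := (MvPolynomial.totalDegree_add _ _).trans (max_le (hp i) (hq i))
  neg_mem' hp i := by rw [coeff_neg, MvPolynomial.totalDegree_neg]; exact hp i
  mul_mem' {p q} hp hq i := by
    rw [coeff_mul]
    refine MvPolynomial.totalDegree_finsetSum_le fun x hx => ?_
    rw [← Finset.HasAntidiagonal.mem_antidiagonal.1 hx]
    exact (MvPolynomial.totalDegree_mul _ _).trans (add_le_add (hp x.1) (hq x.2))

variable {E F : Type*} [CommRing E] [Algebra (MvPolynomial σ k) E]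
  [CommRing F] [Algebra (MvPolynomial σ k) F]

/-- The structure map of `E[T]` over the Rees ring. -/
noncomputable def reesMap (E : Type*) [CommRing E] [Algebra (MvPolynomial σ k) E] :
    reesSubring k σ →+* E[X] :=
  (mapRingHom (algebraMap (MvPolynomial σ k) E)).comp (reesSubring k σ).subtype

/-- The extension of the total degree filtration to integral elements: `u` has degree at most `e`
when `u Tᵉ` is integral over the Rees ring, i.e. when `u` satisfies a monic equation of some degree
`r` whose `i`-th coefficient is a polynomial of degree at most `e (r - i)`. -/
def HasDegreeLE (e : ℕ) (u : E) : Prop :=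
  (reesMap k σ E).IsIntegralElem (C u * X ^ e)

variable {k σ} {e e' : ℕ} {u v : E}

theorem hasDegreeLE_algebraMap {q : MvPolynomial σ k} (hq : q.totalDegree ≤ e) :
    HasDegreeLE k σ e (algebraMap _ E q) := by
  have hmem : C q * X ^ e ∈ reesSubring k σ := fun i => by
    rw [coeff_C_mul_X_pow]
    split_ifs with h
    · exact h ▸ hq
    · simp
  have h : reesMap k σ E ⟨_, hmem⟩ = C (algebraMap _ E q) * X ^ e := by simp [reesMap]
  rw [HasDegreeLE, ← h]
  exact RingHom.isIntegralElem_map _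

theorem HasDegreeLE.mul (hu : HasDegreeLE k σ e u) (hv : HasDegreeLE k σ e' v) :
    HasDegreeLE k σ (e + e') (u * v) := by
  have h : C (u * v) * X ^ (e + e') = (C u * X ^ e) * (C v * X ^ e') := by
    rw [C_mul, pow_add]; ring
  rw [HasDegreeLE, h]
  exact RingHom.IsIntegralElem.mul _ hu hv

theorem HasDegreeLE.add (hu : HasDegreeLE k σ e u) (hv : HasDegreeLE k σ e v) :
    HasDegreeLE k σ e (u + v) := by
  rw [HasDegreeLE, C_add, add_mul]
  exact RingHom.IsIntegralElem.add _ hu hv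

theorem HasDegreeLE.mono (hu : HasDegreeLE k σ e u) (h : e ≤ e') : HasDegreeLE k σ e' u := by
  have h1 := hu.mul (hasDegreeLE_algebraMap (E := E) (q := 1) (e := e' - e) (by simp))
  rwa [map_one, mul_one, Nat.add_sub_cancel' h] at h1

theorem HasDegreeLE.pow (hu : HasDegreeLE k σ e u) (r : ℕ) : HasDegreeLE k σ (e * r) (u ^ r) := by
  induction r with
  | zero =>
    rw [pow_zero, ← map_one (algebraMap (MvPolynomial σ k) E)]
    exact hasDegreeLE_algebraMap (by simp)
  | succ r ih => rw [pow_succ, mul_add_one]; exact ih.mul hu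

theorem hasDegreeLE_sum {ι : Type*} {s : Finset ι} {g : ι → E}
    (hg : ∀ i ∈ s, HasDegreeLE k σ e (g i)) : HasDegreeLE k σ e (∑ i ∈ s, g i) := by
  refine Finset.sum_induction g _ (fun _ _ => HasDegreeLE.add) ?_ hg
  simpa using hasDegreeLE_algebraMap (E := E) (q := (0 : MvPolynomial σ k)) (e := e) (by simp)

theorem HasDegreeLE.map (φ : E →ₐ[MvPolynomial σ k] F) (hu : HasDegreeLE k σ e u) :
    HasDegreeLE k σ e (φ u) := by
  have hφ : (mapRingHom (φ : E →+* F)).comp (reesMap k σ E) = reesMap k σ F := by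
    rw [reesMap, ← RingHom.comp_assoc, mapRingHom_comp, AlgHom.comp_algebraMap, reesMap]
  have h := RingHom.IsIntegralElem.map hu (mapRingHom (φ : E →+* F))
  rw [hφ] at h
  simpa [HasDegreeLE] using h

theorem HasDegreeLE.isIntegral (hu : HasDegreeLE k σ e u) : IsIntegral (MvPolynomial σ k) u := by
  let := Polynomial.algebra (MvPolynomial σ k) E
  have h : IsIntegral (MvPolynomial σ k)[X] (C u * X ^ e) :=
    RingHom.IsIntegralElem.of_comp (f := (reesSubring k σ).subtype) hu
  simpa using h.coeff e

theorem hasDegreeLE_of_isRoot [Nontrivial E] {Q : E[X]} (hQ : Q.Monic)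
    (hcoeff : ∀ i < Q.natDegree, HasDegreeLE k σ (e * (Q.natDegree - i)) (Q.coeff i))
    (hroot : Q.IsRoot u) : HasDegreeLE k σ e u := by
  let := (reesMap k σ E).toAlgebra
  let Q' : E[X][X] := (Q.map C).scaleRoots (X ^ e)
  have hdeg : (Q.map (C : E →+* E[X])).natDegree = Q.natDegree := hQ.natDegree_map _
  have hQ' : Q'.Monic := (monic_scaleRoots_iff _).2 (hQ.map _)
  have hcoeff' (i : ℕ) : IsIntegral (reesSubring k σ) (Q'.coeff i) := by
    rw [coeff_scaleRoots, hdeg, coeff_map, ← pow_mul]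
    rcases lt_trichotomy i Q.natDegree with h | rfl | h
    · exact hcoeff i h
    · simpa [hQ.coeff_natDegree] using isIntegral_one
    · simpa [coeff_eq_zero_of_natDegree_lt h] using isIntegral_zero
  have hroot' : Q'.eval (C u * X ^ e) = 0 := by
    rw [mul_comm, scaleRoots_eval_mul, eval_map_apply, hroot.eq_zero, C_0, mul_zero]
  have hdeg' : Q'.natDegree ≠ 0 := by
    rw [natDegree_scaleRoots, hdeg]
    exact (natDegree_pos_of_monic_of_aeval_eq_zero hQ (by rwa [coe_aeval_eq_eval])).ne'
  exact IsIntegral.of_aeval_monic_of_isIntegral_coeff hQ' hdeg' (hroot' ▸ isIntegral_zero) hcoeff'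

theorem hasDegreeLE_of_monic_of_isRoot [Nontrivial E] {Q : E[X]} (hQ : Q.Monic)
    (hcoeff : ∀ i, HasDegreeLE k σ e (Q.coeff i)) (hroot : Q.IsRoot u) : HasDegreeLE k σ e u :=
  hasDegreeLE_of_isRoot hQ
    (fun i hi => (hcoeff i).mono (Nat.le_mul_of_pos_right e (Nat.sub_pos_of_lt hi))) hroot

theorem totalDegree_pow_eq (q : MvPolynomial σ k) (n : ℕ) :
    (q ^ n).totalDegree = n * q.totalDegree := by
  by_cases hq : q = 0
  · cases n <;> simp [hq]
  induction n with
  | zero => simp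
  | succ n ih =>
    rw [pow_succ, MvPolynomial.totalDegree_mul_of_isDomain (pow_ne_zero n hq) hq, ih, add_one_mul]

theorem totalDegree_le_of_hasDegreeLE [FaithfulSMul (MvPolynomial σ k) E] {q : MvPolynomial σ k}
    (hq : HasDegreeLE k σ e (algebraMap _ E q)) : q.totalDegree ≤ e := by
  have hinj : Function.Injective (mapRingHom (algebraMap (MvPolynomial σ k) E)) :=
    map_injective _ (FaithfulSMul.algebraMap_injective _ _)
  obtain ⟨p, hp, hpq⟩ : (reesSubring k σ).subtype.IsIntegralElem (C q * X ^ e) :=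
    RingHom.IsIntegralElem.of_map hinj (by simpa [HasDegreeLE, reesMap] using hq)
  by_contra! hlt
  -- the coefficient of `T ^ (e * r)` in the integral equation of `q Tᵉ`
  have hrel : ∑ i ∈ Finset.range (p.natDegree + 1),
      (p.coeff i : (MvPolynomial σ k)[X]).coeff (e * (p.natDegree - i)) * q ^ i = 0 := by
    rw [eval₂_eq_sum_range] at hpq
    rw [← coeff_zero (e * p.natDegree), ← hpq, finsetSum_coeff]
    refine Finset.sum_congr rfl fun i hi => ?_
    have hi : e * p.natDegree = e * (p.natDegree - i) + e * i := by
      rw [← mul_add, Nat.sub_add_cancel (Finset.mem_range_succ_iff.1 hi)]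
    rw [hi, mul_pow, ← pow_mul, ← mul_assoc, coeff_mul_X_pow, ← C_pow, coeff_mul_C,
      Subring.subtype_apply]
  have hlow (i : ℕ) (hi : i < p.natDegree) :
      ((p.coeff i : (MvPolynomial σ k)[X]).coeff (e * (p.natDegree - i)) * q ^ i).totalDegree <
        p.natDegree * q.totalDegree :=
    calc _ ≤ e * (p.natDegree - i) + i * q.totalDegree :=
          (MvPolynomial.totalDegree_mul _ _).trans
            (add_le_add ((p.coeff i).2 _) (MvPolynomial.totalDegree_pow q i))
      _ < q.totalDegree * (p.natDegree - i) + i * q.totalDegree := by gcongr; lia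
      _ = p.natDegree * q.totalDegree := by
          rw [mul_comm i, ← mul_add, Nat.sub_add_cancel hi.le, mul_comm]
  rw [Finset.sum_range_succ, hp.coeff_natDegree, Nat.sub_self, mul_zero, OneMemClass.coe_one,
    coeff_one_zero, one_mul, add_comm, ← eq_neg_iff_add_eq_zero] at hrel
  have hr : 0 < p.natDegree := Nat.pos_of_ne_zero fun h => by simp [h] at hrel
  refine (totalDegree_pow_eq q p.natDegree).not_lt ?_
  rw [hrel, MvPolynomial.totalDegree_neg]
  refine (MvPolynomial.totalDegree_finsetSum _ _).trans_lt ((Finset.sup_lt_iff ?_).2 fun i hi => ?_)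
  · exact Nat.mul_pos hr (Nat.zero_lt_of_lt hlt)
  · exact hlow i (Finset.mem_range.1 hi)

theorem exists_totalDegree_le_trace {L E : Type*} [Field L] [Field E]
    [Algebra (MvPolynomial σ k) L] [IsFractionRing (MvPolynomial σ k) L] [Algebra L E]
    [Algebra (MvPolynomial σ k) E] [IsScalarTower (MvPolynomial σ k) L E]
    [FiniteDimensional L E] [Algebra.IsSeparable L E] {e : ℕ} {u : E} (hu : HasDegreeLE k σ e u) :
    ∃ q : MvPolynomial σ k, q.totalDegree ≤ e ∧ algebraMap _ L q = Algebra.trace L E u := by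
  obtain ⟨q, hq⟩ := IsIntegrallyClosed.isIntegral_iff.1
    (Algebra.isIntegral_trace (L := L) hu.isIntegral)
  have : FaithfulSMul (MvPolynomial σ k) (AlgebraicClosure L) := by
    rw [faithfulSMul_iff_algebraMap_injective, IsScalarTower.algebraMap_eq _ L]
    exact (algebraMap L _).injective.comp (IsFractionRing.injective (MvPolynomial σ k) L)
  refine ⟨q, totalDegree_le_of_hasDegreeLE (E := AlgebraicClosure L) ?_, hq⟩
  rw [IsScalarTower.algebraMap_apply _ L, hq, trace_eq_sum_embeddings (AlgebraicClosure L)]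
  exact hasDegreeLE_sum fun φ _ => hu.map (φ.restrictScalars (MvPolynomial σ k))

end DegreeOfIntegralElements

section Euler

variable {K L : Type*} [Field K] [Field L] [Algebra K L] [FiniteDimensional K L] {y : L}

theorem exists_natDegree_lt_aeval_eq (hy : Algebra.adjoin K {y} = ⊤) (u : L) :
    ∃ p : K[X], p.natDegree < (minpoly K y).natDegree ∧ aeval y p = u := by
  have hint : IsIntegral K y := Algebra.IsIntegral.isIntegral y
  have hmem : u ∈ Algebra.adjoin K {y} := hy ▸ Algebra.mem_top
  rw [Algebra.adjoin_singleton_eq_range_aeval] at hmem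
  obtain ⟨p, hp⟩ := hmem
  exact ⟨p %ₘ minpoly K y, natDegree_modByMonic_lt _ (minpoly.monic hint) (minpoly.ne_one K y),
    by rwa [aeval_modByMonic_eq_self_of_root (minpoly.aeval K y)]⟩

variable [Algebra.IsSeparable K L]

theorem trace_mul_coeff_minpolyDiv (hy : Algebra.adjoin K {y} = ⊤) {u : L} {p : K[X]}
    (hp : p.natDegree < (minpoly K y).natDegree)
    (h : aeval y p = u * aeval y (derivative (minpoly K y))) (j : ℕ) :
    Algebra.trace K L (u * (minpolyDiv K y).coeff j) = p.coeff j := by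
  have hint : IsIntegral K y := Algebra.IsIntegral.isIntegral y
  rcases le_or_gt (minpoly K y).natDegree j with hj | hj
  · rw [coeff_eq_zero_of_natDegree_lt ((natDegree_minpolyDiv_lt hint).trans_le hj), mul_zero,
      map_zero, coeff_eq_zero_of_natDegree_lt (hp.trans_le hj)]
  let pb := PowerBasis.ofAdjoinEqTop hint hy
  have hgen : pb.gen = y := PowerBasis.ofAdjoinEqTop_gen hint hy
  have hdim : pb.dim = (minpoly K y).natDegree := PowerBasis.ofAdjoinEqTop_dim hint hy
  have hne : aeval y (derivative (minpoly K y)) ≠ 0 :=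
    (Algebra.IsSeparable.isSeparable K y).aeval_derivative_ne_zero (minpoly.aeval _ _)
  obtain ⟨i, rfl⟩ : ∃ i : Fin pb.dim, (i : ℕ) = j := ⟨⟨j, hdim ▸ hj⟩, rfl⟩
  have hrepr : aeval y p = ∑ i : Fin pb.dim, p.coeff i • pb.basis i := by
    rw [aeval_eq_sum_range' (hdim ▸ hp), Finset.sum_range]
    simp only [PowerBasis.coe_basis, hgen]
  calc Algebra.trace K L (u * (minpolyDiv K y).coeff i)
      = Algebra.trace K L (aeval y p * pb.basis.traceDual i) := by
        rw [Module.Basis.traceDual_powerBasis_eq, hgen, h, mul_assoc, mul_div_cancel₀ _ hne]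
    _ = p.coeff i := by
        rw [← Algebra.traceForm_apply, ← Module.Basis.traceDual_repr_apply,
          Module.Basis.traceDual_traceDual, hrepr, pb.basis.repr_sum_self]

theorem trace_coeff_minpolyDiv (hy : Algebra.adjoin K {y} = ⊤) (j : ℕ) :
    Algebra.trace K L ((minpolyDiv K y).coeff j) = (derivative (minpoly K y)).coeff j := by
  have hdeg := natDegree_derivative_lt
    (minpoly.natDegree_pos (Algebra.IsIntegral.isIntegral (R := K) y)).ne'
  simpa using trace_mul_coeff_minpolyDiv hy (u := 1) hdeg (one_mul _).symm j

end Euler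

section TraceDegree

variable {k σ : Type*} [Field k] {e : ℕ} {f : (MvPolynomial σ k)[X]}

theorem hasDegreeLE_one_of_aeval_eq_zero {E : Type*} [CommRing E] [Nontrivial E]
    [Algebra (MvPolynomial σ k) E] (hf : f.Monic)
    (hdeg : ∀ j, (f.coeff j).totalDegree ≤ f.natDegree - j) {y : E} (hy : aeval y f = 0) :
    HasDegreeLE k σ 1 y := by
  refine hasDegreeLE_of_isRoot (hf.map (algebraMap _ E)) (fun i _ => ?_)
    (by rwa [IsRoot, eval_map_algebraMap])
  rw [hf.natDegree_map, coeff_map, one_mul]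
  exact hasDegreeLE_algebraMap (hdeg i)

variable {L κ E : Type*} [Field L] [Field κ] [Field E] [Algebra L κ] [FiniteDimensional L κ]
  [Algebra (MvPolynomial σ k) L] [Algebra (MvPolynomial σ k) κ]
  [IsScalarTower (MvPolynomial σ k) L κ] {y : κ}

theorem hasDegreeLE_coeff_minpolyDiv (hf : f.Monic)
    (hdeg : ∀ j, (f.coeff j).totalDegree ≤ f.natDegree - j)
    (hmin : minpoly L y = f.map (algebraMap _ L)) {n j : ℕ} (hj : f.natDegree ≤ j + n + 1) :
    HasDegreeLE k σ n ((minpolyDiv L y).coeff j) := by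
  induction n generalizing j with
  | zero =>
    have hlt := natDegree_minpolyDiv_lt (Algebra.IsIntegral.isIntegral (R := L) y)
    rw [hmin, hf.natDegree_map] at hlt
    rw [coeff_minpolyDiv, coeff_eq_zero_of_natDegree_lt (p := minpolyDiv L y) (n := j + 1) (by lia),
      zero_mul, add_zero, hmin, coeff_map, ← IsScalarTower.algebraMap_apply]
    exact hasDegreeLE_algebraMap ((hdeg _).trans (by lia))
  | succ n ih =>
    have hroot : aeval y f = 0 := by rw [← aeval_map_algebraMap L, ← hmin, minpoly.aeval]
    rw [coeff_minpolyDiv, hmin, coeff_map, ← IsScalarTower.algebraMap_apply]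
    exact (hasDegreeLE_algebraMap ((hdeg _).trans (by lia))).add
      ((ih (by lia)).mul (hasDegreeLE_one_of_aeval_eq_zero hf hdeg hroot))

-- By Euler's formula the coefficients of `f'(y) Tr β` in the basis of powers of `y` are the traces
-- of the products `β bⱼ`, where `f / (X - y) = ∑ⱼ bⱼ Xʲ`.
theorem exists_aeval_eq_derivative_mul_trace [CharZero k] [IsFractionRing (MvPolynomial σ k) L]
    [Algebra (MvPolynomial σ k) E] [Algebra κ E] [Algebra L E]
    [IsScalarTower (MvPolynomial σ k) κ E] [IsScalarTower (MvPolynomial σ k) L E]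
    [IsScalarTower L κ E] [FiniteDimensional κ E] (hf : f.Monic)
    (hdeg : ∀ j, (f.coeff j).totalDegree ≤ f.natDegree - j)
    (hmin : minpoly L y = f.map (algebraMap _ L)) (hy : Algebra.adjoin L {y} = ⊤) {β : E}
    (hβ : HasDegreeLE k σ e β) :
    ∃ Q : (MvPolynomial σ k)[X],
      (∀ j ∈ Q.support, (Q.coeff j).totalDegree + j ≤ f.natDegree + e) ∧
        aeval y Q = aeval y (derivative f) * Algebra.trace κ E β := by
  have : CharZero L :=
    charZero_of_injective_algebraMap (IsFractionRing.injective (MvPolynomial σ k) L)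
  have : FiniteDimensional L E := FiniteDimensional.trans L κ E
  have hnat : (minpoly L y).natDegree = f.natDegree := by rw [hmin, hf.natDegree_map]
  obtain ⟨p, hp, hpy⟩ := exists_natDegree_lt_aeval_eq hy
    (Algebra.trace κ E β * aeval y (derivative (minpoly L y)))
  have hcoeff (j : ℕ) (_ : j < f.natDegree) : ∃ q : MvPolynomial σ k,
      q.totalDegree ≤ f.natDegree - 1 - j + e ∧ algebraMap _ L q = p.coeff j := by
    have hb := hasDegreeLE_coeff_minpolyDiv hf hdeg hmin
      (j := j) (n := f.natDegree - 1 - j) (by lia)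
    obtain ⟨q, hq, hqp⟩ := exists_totalDegree_le_trace (L := L)
      ((hb.map (IsScalarTower.toAlgHom (MvPolynomial σ k) κ E)).mul hβ)
    refine ⟨q, hq, ?_⟩
    rw [hqp, ← trace_mul_coeff_minpolyDiv hy hp hpy, ← Algebra.trace_trace (S := κ),
      IsScalarTower.toAlgHom_apply, ← Algebra.smul_def, map_smul, smul_eq_mul, mul_comm]
  have hinj := IsFractionRing.injective (MvPolynomial σ k) L
  obtain ⟨Q, hQ⟩ := (mem_lifts p).1 <| (lifts_iff_coeff_lifts p).2 fun j => by
    rcases lt_or_ge j f.natDegree with hj | hj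
    · exact (hcoeff j hj).imp fun _ h => h.2
    · exact ⟨0, by rw [map_zero, coeff_eq_zero_of_natDegree_lt (by lia)]⟩
  refine ⟨Q, fun j hj => ?_, ?_⟩
  · have hj : j < f.natDegree := by
      rw [← hnat]
      refine (le_natDegree_of_mem_supp j ?_).trans_lt hp
      rwa [← hQ, support_map_of_injective _ hinj]
    obtain ⟨q, hq, hqp⟩ := hcoeff j hj
    rw [← hQ, coeff_map] at hqp
    rw [← hinj hqp]
    lia
  · rw [← aeval_map_algebraMap L, hQ, hpy, hmin, derivative_map, aeval_map_algebraMap, mul_comm]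

end TraceDegree

section LinearChangeOfVariables

variable {k : Type*}

theorem totalDegree_aeval_le {σ τ : Type*} [CommSemiring k] {g : σ → MvPolynomial τ k}
    (hg : ∀ i, (g i).totalDegree ≤ 1) (p : MvPolynomial σ k) :
    (MvPolynomial.aeval g p).totalDegree ≤ p.totalDegree := by
  rw [MvPolynomial.aeval_def, MvPolynomial.eval₂_eq]
  refine MvPolynomial.totalDegree_finsetSum_le fun s hs => ?_
  calc _ ≤ 0 + ∑ i ∈ s.support, s i * 1 := by
        refine (MvPolynomial.totalDegree_mul _ _).trans
          (add_le_add (MvPolynomial.totalDegree_C _).le ?_)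
        refine (MvPolynomial.totalDegree_finsetProd _ _).trans (Finset.sum_le_sum fun i _ => ?_)
        exact (MvPolynomial.totalDegree_pow _ _).trans (Nat.mul_le_mul_left _ (hg i))
    _ ≤ p.totalDegree := by
        simpa only [zero_add, mul_one, Finsupp.sum] using MvPolynomial.le_totalDegree hs

variable [Field k]

theorem homogeneousComponent_totalDegree_ne_zero {σ : Type*} {f : MvPolynomial σ k} (hf : f ≠ 0) :
    MvPolynomial.homogeneousComponent f.totalDegree f ≠ 0 := by
  obtain ⟨s, hs, hsup⟩ := Finset.exists_mem_eq_sup f.support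
    (MvPolynomial.support_nonempty.2 hf) Finsupp.degree
  intro h
  have hcoeff := congrArg (MvPolynomial.coeff s) h
  rw [MvPolynomial.coeff_homogeneousComponent, if_pos, MvPolynomial.coeff_zero] at hcoeff
  · exact MvPolynomial.mem_support_iff.1 hs hcoeff
  · exact hsup.symm

theorem coeff_aeval_C_mul_X {σ : Type*} (v : σ → k) (p : MvPolynomial σ k) (d : ℕ) :
    (MvPolynomial.aeval (fun l => C (v l) * X) p).coeff d =
      MvPolynomial.eval v (MvPolynomial.homogeneousComponent d p) := by
  induction p using MvPolynomial.induction_on' with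
  | add p q hp hq => simp only [map_add, coeff_add, hp, hq]
  | monomial s c =>
    have hpoly : MvPolynomial.aeval (fun l => C (v l) * X) (MvPolynomial.monomial s c) =
        C (c * s.prod fun l n => v l ^ n) * X ^ s.degree := by
      simp only [MvPolynomial.aeval_monomial, mul_pow, Finsupp.prod, Finset.prod_mul_distrib,
        Finset.prod_pow_eq_pow_sum, map_mul, map_prod, map_pow, algebraMap_eq, mul_assoc,
        Finsupp.degree_apply]
    rw [hpoly, coeff_C_mul_X_pow, MvPolynomial.homogeneousComponent_of_mem
      (MvPolynomial.isHomogeneous_monomial c rfl)]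
    split_ifs
    · rw [MvPolynomial.eval_monomial]
    · rw [map_zero]

theorem span_eval_ne_zero [Infinite k] {σ : Type*} [Finite σ] {h : MvPolynomial σ k}
    (hh : h ≠ 0) : Submodule.span k {v | MvPolynomial.eval v h ≠ 0} = ⊤ := by
  classical
  have := Fintype.ofFinite σ
  by_contra hne
  obtain ⟨φ, hφ, hle⟩ := Submodule.exists_le_ker_of_lt_top _ (lt_top_iff_ne_top.2 hne)
  let p : MvPolynomial σ k := ∑ i, MvPolynomial.C (φ (Pi.single i 1)) * MvPolynomial.X i
  have hp (v : σ → k) : MvPolynomial.eval v p = φ v := by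
    simp only [p, map_sum, map_mul, MvPolynomial.eval_C, MvPolynomial.eval_X]
    rw [LinearMap.pi_apply_eq_sum_univ φ v]
    exact Finset.sum_congr rfl fun i _ => by
      rw [smul_eq_mul, mul_comm]; congr 2; ext j; simp [Pi.single_apply, eq_comm]
  have hmul : p * h = 0 := MvPolynomial.funext fun v => by
    rw [map_mul, map_zero, hp]
    by_cases hv : MvPolynomial.eval v h = 0
    · rw [hv, mul_zero]
    · rw [LinearMap.mem_ker.1 (hle (Submodule.subset_span hv)), zero_mul]
  refine hφ (LinearMap.ext fun v => ?_)
  rw [← hp, (mul_eq_zero.1 hmul).resolve_right hh, map_zero, LinearMap.zero_apply]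

theorem totalDegree_C_mul_X_le {σ : Type*} (c : k) (l : σ) :
    (MvPolynomial.C c * MvPolynomial.X l).totalDegree ≤ 1 :=
  (MvPolynomial.totalDegree_mul _ _).trans (by simp)

theorem finSuccEquiv_rename_succ {n : ℕ} (p : MvPolynomial (Fin n) k) :
    MvPolynomial.finSuccEquiv k n (MvPolynomial.rename Fin.succ p) = C p := by
  induction p using MvPolynomial.induction_on with
  | C a => rw [MvPolynomial.rename_C]; exact (MvPolynomial.finSuccEquiv k n).commutes a
  | add p q hp hq => simp only [map_add, hp, hq]
  | mul_X p l hp =>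
    simp only [map_mul, hp, MvPolynomial.rename_X, MvPolynomial.finSuccEquiv_X_succ]

variable {n : ℕ} (v : Fin (n + 1) → k)

/-- The derivation of the polynomial ring taking the derivative in the direction `v`. -/
noncomputable def directionalDerivation {σ : Type*} (v : σ → k) :
    Derivation k (MvPolynomial σ k) (MvPolynomial σ k) :=
  MvPolynomial.mkDerivation k fun l => MvPolynomial.C (v l)

theorem directionalDerivation_add {σ : Type*} (v w : σ → k) (p : MvPolynomial σ k) :
    directionalDerivation (v + w) p = directionalDerivation v p + directionalDerivation w p := by
  have h : directionalDerivation (v + w) = directionalDerivation v + directionalDerivation w :=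
    MvPolynomial.derivation_ext fun l => by
      simp only [directionalDerivation, Derivation.add_apply, MvPolynomial.mkDerivation_X,
        Pi.add_apply, map_add]
  rw [h, Derivation.add_apply]

theorem directionalDerivation_smul {σ : Type*} (c : k) (v : σ → k) (p : MvPolynomial σ k) :
    directionalDerivation (c • v) p = c • directionalDerivation v p := by
  have h : directionalDerivation (c • v) = c • directionalDerivation v :=
    MvPolynomial.derivation_ext fun l => by
      simp only [directionalDerivation, Derivation.smul_apply, MvPolynomial.mkDerivation_X,
        Pi.smul_apply, smul_eq_mul, map_mul, MvPolynomial.smul_eq_C_mul]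
  rw [h, Derivation.smul_apply]

theorem directionalDerivation_single {σ : Type*} [DecidableEq σ] (l : σ) :
    directionalDerivation (Pi.single l (1 : k)) = MvPolynomial.pderiv l :=
  MvPolynomial.derivation_ext fun i => by
    rw [directionalDerivation, MvPolynomial.mkDerivation_X, MvPolynomial.pderiv_X,
      Pi.single_apply, Pi.single_apply]
    split_ifs <;> simp

/-- The substitution `X₀ ↦ v₀ X₀`, `Xₗ ↦ Xₗ + vₗ X₀`, which turns the direction `v` into the first
coordinate direction. -/
noncomputable def shear : MvPolynomial (Fin (n + 1)) k →ₐ[k] MvPolynomial (Fin (n + 1)) k :=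
  MvPolynomial.aeval (Fin.cons (MvPolynomial.C (v 0) * MvPolynomial.X 0)
    fun l => MvPolynomial.X l.succ + MvPolynomial.C (v l.succ) * MvPolynomial.X 0)

/-- The inverse of the substitution `shear v` for `v₀ ≠ 0`. -/
noncomputable def unshear : MvPolynomial (Fin (n + 1)) k →ₐ[k] MvPolynomial (Fin (n + 1)) k :=
  MvPolynomial.aeval (Fin.cons (MvPolynomial.C (v 0)⁻¹ * MvPolynomial.X 0)
    fun l => MvPolynomial.X l.succ - MvPolynomial.C (v l.succ * (v 0)⁻¹) * MvPolynomial.X 0)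

theorem totalDegree_shear_le (p : MvPolynomial (Fin (n + 1)) k) :
    (shear v p).totalDegree ≤ p.totalDegree :=
  totalDegree_aeval_le (Fin.cases (totalDegree_C_mul_X_le _ _) fun _ =>
    (MvPolynomial.totalDegree_add _ _).trans
      (max_le (MvPolynomial.totalDegree_X _).le (totalDegree_C_mul_X_le _ _))) p

theorem totalDegree_unshear_le (p : MvPolynomial (Fin (n + 1)) k) :
    (unshear v p).totalDegree ≤ p.totalDegree :=
  totalDegree_aeval_le (Fin.cases (totalDegree_C_mul_X_le _ _) fun _ =>
    (MvPolynomial.totalDegree_sub _ _).trans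
      (max_le (MvPolynomial.totalDegree_X _).le (totalDegree_C_mul_X_le _ _))) p

variable {v} (hv : v 0 ≠ 0)

include hv in
theorem shear_comp_unshear : (shear v).comp (unshear v) = AlgHom.id k _ := by
  have hC : (MvPolynomial.C (v 0)⁻¹ * MvPolynomial.C (v 0) : MvPolynomial (Fin (n + 1)) k) = 1 := by
    rw [← MvPolynomial.C_mul, inv_mul_cancel₀ hv, MvPolynomial.C_1]
  refine MvPolynomial.algHom_ext fun l => Fin.cases ?_ (fun l => ?_) l
  · simp [shear, unshear, MvPolynomial.algebraMap_eq, ← mul_assoc, hC]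
  · simp [shear, unshear, MvPolynomial.algebraMap_eq]
    linear_combination -(MvPolynomial.C (v l.succ) * MvPolynomial.X 0) * hC

include hv in
theorem unshear_comp_shear : (unshear v).comp (shear v) = AlgHom.id k _ := by
  have hC : (MvPolynomial.C (v 0) * MvPolynomial.C (v 0)⁻¹ : MvPolynomial (Fin (n + 1)) k) = 1 := by
    rw [← MvPolynomial.C_mul, mul_inv_cancel₀ hv, MvPolynomial.C_1]
  refine MvPolynomial.algHom_ext fun l => Fin.cases ?_ (fun l => ?_) l
  · simp [shear, unshear, MvPolynomial.algebraMap_eq, ← mul_assoc, hC]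
  · simp [shear, unshear, MvPolynomial.algebraMap_eq, ← mul_assoc]

/-- The substitution `shear v` followed by singling out the variable `X₀`. -/
noncomputable def shearEquiv :
    MvPolynomial (Fin (n + 1)) k ≃ₐ[k] (MvPolynomial (Fin n) k)[X] :=
  (AlgEquiv.ofAlgHom _ _ (shear_comp_unshear hv) (unshear_comp_shear hv)).trans
    (MvPolynomial.finSuccEquiv k n)

theorem shearEquiv_apply (p : MvPolynomial (Fin (n + 1)) k) :
    shearEquiv hv p = MvPolynomial.finSuccEquiv k n (shear v p) := rfl

theorem shearEquiv_C (c : k) : shearEquiv hv (MvPolynomial.C c) = C (MvPolynomial.C c) :=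
  (shearEquiv hv).commutes c

theorem shearEquiv_X (l : Fin (n + 1)) : ∃ q : MvPolynomial (Fin n) k, q.totalDegree ≤ 1 ∧
    shearEquiv hv (MvPolynomial.X l) = C q + C (MvPolynomial.C (v l)) * X := by
  have hC (c : k) : MvPolynomial.finSuccEquiv k n (MvPolynomial.C c) = C (MvPolynomial.C c) :=
    (MvPolynomial.finSuccEquiv k n).commutes c
  rw [shearEquiv_apply]
  refine Fin.cases ⟨0, ?_, ?_⟩
    (fun l => ⟨MvPolynomial.X l, (MvPolynomial.totalDegree_X _).le, ?_⟩) l <;>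
    simp [shear, MvPolynomial.finSuccEquiv_X_zero, MvPolynomial.finSuccEquiv_X_succ, hC]

theorem totalDegree_coeff_shearEquiv_add_le (p : MvPolynomial (Fin (n + 1)) k) {j : ℕ}
    (hj : (shearEquiv hv p).coeff j ≠ 0) :
    ((shearEquiv hv p).coeff j).totalDegree + j ≤ p.totalDegree := by
  rw [shearEquiv_apply] at hj ⊢
  exact (MvPolynomial.totalDegree_coeff_finSuccEquiv_add_le _ _ hj).trans (totalDegree_shear_le v p)

theorem coeff_totalDegree_shearEquiv (p : MvPolynomial (Fin (n + 1)) k) :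
    (shearEquiv hv p).coeff p.totalDegree = MvPolynomial.C
      (MvPolynomial.eval v (MvPolynomial.homogeneousComponent p.totalDegree p)) := by
  have hconst : ((shearEquiv hv p).coeff p.totalDegree).totalDegree = 0 := by
    by_contra h
    have := totalDegree_coeff_shearEquiv_add_le hv p (j := p.totalDegree)
      (fun h0 => h (by rw [h0, MvPolynomial.totalDegree_zero]))
    lia
  have hray : (mapRingHom MvPolynomial.constantCoeff).comp
      (shearEquiv hv : MvPolynomial (Fin (n + 1)) k →+* (MvPolynomial (Fin n) k)[X]) =
      (MvPolynomial.aeval fun l => C (v l) * X : MvPolynomial (Fin (n + 1)) k →ₐ[k] k[X]) := by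
    refine MvPolynomial.ringHom_ext (fun c => by simp [shearEquiv_C]) fun l => ?_
    refine Fin.cases ?_ (fun l => ?_) l <;>
      simp [shearEquiv_apply, shear, MvPolynomial.finSuccEquiv_apply]
  have hcoeff := congrArg (coeff · p.totalDegree) (RingHom.congr_fun hray p)
  rw [MvPolynomial.totalDegree_eq_zero_iff_eq_C.1 hconst, ← coeff_aeval_C_mul_X]
  congr 1
  simpa [MvPolynomial.constantCoeff_eq] using hcoeff

theorem totalDegree_shearEquiv_symm_le {e : ℕ} {Q : (MvPolynomial (Fin n) k)[X]}
    (hQ : ∀ j ∈ Q.support, (Q.coeff j).totalDegree + j ≤ e) :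
    ((shearEquiv hv).symm Q).totalDegree ≤ e := by
  refine (totalDegree_unshear_le v ((MvPolynomial.finSuccEquiv k n).symm Q)).trans ?_
  have hsum : (MvPolynomial.finSuccEquiv k n).symm Q =
      ∑ j ∈ Q.support, MvPolynomial.rename Fin.succ (Q.coeff j) * MvPolynomial.X 0 ^ j := by
    rw [AlgEquiv.symm_apply_eq, map_sum]
    conv_lhs => rw [Q.as_sum_support_C_mul_X_pow]
    exact Finset.sum_congr rfl fun j _ => by
      rw [map_mul, map_pow, MvPolynomial.finSuccEquiv_X_zero, finSuccEquiv_rename_succ]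
  rw [hsum]
  refine MvPolynomial.totalDegree_finsetSum_le fun j hj =>
    (MvPolynomial.totalDegree_mul _ _).trans (le_trans ?_ (hQ j hj))
  exact add_le_add (MvPolynomial.totalDegree_rename_le _ _) (MvPolynomial.totalDegree_X_pow _ _).le

theorem derivative_shearEquiv (p : MvPolynomial (Fin (n + 1)) k) :
    derivative (shearEquiv hv p) = shearEquiv hv (directionalDerivation v p) := by
  induction p using MvPolynomial.induction_on with
  | C a => rw [MvPolynomial.derivation_C, map_zero, shearEquiv_C, derivative_C]
  | add p q hp hq => simp only [map_add, hp, hq]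
  | mul_X p l hp =>
    obtain ⟨q, -, hq⟩ := shearEquiv_X hv l
    rw [Derivation.leibniz, directionalDerivation, MvPolynomial.mkDerivation_X,
      ← directionalDerivation, map_mul, derivative_mul, hp, hq]
    simp only [smul_eq_mul, map_add, map_mul, shearEquiv_C, hq, derivative_C, derivative_mul,
      derivative_X]
    ring

end LinearChangeOfVariables

section KernelGenerator

variable {A κ : Type*} [CommRing A] [Field κ] [Algebra A κ] {g : A[X]} {y : κ}

theorem algebraMap_injective_of_aeval_eq_zero_iff [IsDomain A] (hg : g.Monic)
    (hy : ∀ p : A[X], aeval y p = 0 ↔ g ∣ p) : Function.Injective (algebraMap A κ) := by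
  rw [injective_iff_map_eq_zero]
  intro a ha
  have hdvd : g ∣ C a := (hy _).1 (by rw [aeval_C, ha])
  by_contra hne
  have hdeg : g.natDegree = 0 := by
    simpa using natDegree_le_of_dvd hdvd (C_ne_zero.2 hne)
  have hone : aeval y (1 : A[X]) = 0 := (hy 1).2 (by rw [hg.natDegree_eq_zero.1 hdeg])
  rw [map_one] at hone
  exact one_ne_zero hone

variable (L : Type*) [Field L] [Algebra A L] [Algebra L κ] [IsScalarTower A L κ]

theorem minpoly_eq_map_of_aeval_eq_zero_iff [IsDomain A] [IsIntegrallyClosed A]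
    [IsFractionRing A L] (hg : g.Monic)
    (hy : ∀ p : A[X], aeval y p = 0 ↔ g ∣ p) : minpoly L y = g.map (algebraMap A L) := by
  have : FaithfulSMul A κ :=
    (faithfulSMul_iff_algebraMap_injective A κ).2 (algebraMap_injective_of_aeval_eq_zero_iff hg hy)
  have hint : IsIntegral A y := ⟨g, hg, (hy g).2 dvd_rfl⟩
  rw [minpoly.isIntegrallyClosed_eq_field_fractions' L hint]
  congr 1
  refine eq_of_monic_of_associated (minpoly.monic hint) hg (associated_of_dvd_dvd ?_ ?_)
  · exact minpoly.isIntegrallyClosed_dvd hint ((hy g).2 dvd_rfl)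
  · exact (hy _).1 (minpoly.aeval A y)

theorem adjoin_eq_top_of_closure_range_aeval (hint : IsIntegral L y)
    (hcl : Subfield.closure (Set.range (aeval (R := A) y)) = ⊤) : Algebra.adjoin L {y} = ⊤ := by
  rw [← IntermediateField.adjoin_simple_toSubalgebra_of_isAlgebraic hint.isAlgebraic]
  suffices h : Subfield.closure (Set.range (aeval (R := A) y)) ≤
      (IntermediateField.adjoin L {y}).toSubfield by
    rw [hcl] at h
    exact eq_top_iff.2 fun x _ => h (Subfield.mem_top x)
  rw [Subfield.closure_le]
  rintro _ ⟨p, rfl⟩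
  rw [← aeval_map_algebraMap L]
  exact IntermediateField.algebra_adjoin_le_adjoin L _ (aeval_mem_adjoin_singleton _ _)

end KernelGenerator

section DirectionalDerivative

variable {k : Type*} [Field k] {n : ℕ} {κ E : Type*} [Field κ] [Field E]
  [Algebra (MvPolynomial (Fin (n + 1)) k) κ] {f : MvPolynomial (Fin (n + 1)) k}
  {v : Fin (n + 1) → k}

theorem exists_monic_shearEquiv (hv : v 0 ≠ 0)
    (htop : MvPolynomial.eval v (MvPolynomial.homogeneousComponent f.totalDegree f) ≠ 0) :
    ∃ c : k, c ≠ 0 ∧ ∃ g : (MvPolynomial (Fin n) k)[X], g.Monic ∧ g.natDegree = f.totalDegree ∧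
      (∀ j, (g.coeff j).totalDegree ≤ f.totalDegree - j) ∧
        shearEquiv hv f = C (MvPolynomial.C c) * g := by
  set c := MvPolynomial.eval v (MvPolynomial.homogeneousComponent f.totalDegree f) with hc
  let g := C (MvPolynomial.C c⁻¹) * shearEquiv hv f
  have hfg : shearEquiv hv f = C (MvPolynomial.C c) * g := by
    rw [← mul_assoc, ← C_mul, ← MvPolynomial.C_mul, mul_inv_cancel₀ htop, MvPolynomial.C_1, C_1,
      one_mul]
  have hcoeff (j : ℕ) (hj : g.coeff j ≠ 0) : (g.coeff j).totalDegree + j ≤ f.totalDegree := by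
    rw [coeff_C_mul] at hj ⊢
    have := totalDegree_coeff_shearEquiv_add_le hv f (right_ne_zero_of_mul hj)
    have := MvPolynomial.totalDegree_mul (MvPolynomial.C c⁻¹) ((shearEquiv hv f).coeff j)
    rw [MvPolynomial.totalDegree_C] at this
    lia
  have hlead : g.coeff f.totalDegree = 1 := by
    rw [coeff_C_mul, coeff_totalDegree_shearEquiv, ← MvPolynomial.C_mul, ← hc,
      inv_mul_cancel₀ htop, MvPolynomial.C_1]
  have hle : g.natDegree ≤ f.totalDegree := natDegree_le_iff_coeff_eq_zero.2 fun N hN => by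
    by_contra h
    have := hcoeff N h
    lia
  refine ⟨c, htop, g, monic_of_natDegree_le_of_coeff_eq_one _ hle hlead,
    hle.antisymm (le_natDegree_of_ne_zero (hlead ▸ one_ne_zero)), fun j => ?_, hfg⟩
  by_cases hj : g.coeff j = 0
  · simp [hj]
  · exact Nat.le_sub_of_add_le (hcoeff j hj)

theorem hasDegreeLE_algebraMap_of_aeval_shearEquiv [Algebra (MvPolynomial (Fin n) k) κ]
    (hv : v 0 ≠ 0) {y : κ} (hydeg : HasDegreeLE k (Fin n) 1 y)
    (hy : ∀ p, aeval y (shearEquiv hv p) = algebraMap (MvPolynomial (Fin (n + 1)) k) κ p)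
    {e : ℕ} {p : MvPolynomial (Fin (n + 1)) k} (hp : p.totalDegree ≤ e) :
    HasDegreeLE k (Fin n) e (algebraMap (MvPolynomial (Fin (n + 1)) k) κ p) := by
  rw [← hy, aeval_eq_sum_range]
  refine hasDegreeLE_sum fun j _ => ?_
  by_cases hj : (shearEquiv hv p).coeff j = 0
  · rw [hj, zero_smul, ← map_zero (algebraMap (MvPolynomial (Fin n) k) κ)]
    exact hasDegreeLE_algebraMap (by simp)
  · rw [Algebra.smul_def]
    refine ((hasDegreeLE_algebraMap le_rfl).mul (hydeg.pow j)).mono ?_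
    rw [one_mul]
    exact (totalDegree_coeff_shearEquiv_add_le hv p hj).trans hp

theorem aeval_eq_zero_iff_dvd_of_shearEquiv_eq [Algebra (MvPolynomial (Fin n) k) κ]
    (hker : ∀ p, algebraMap (MvPolynomial (Fin (n + 1)) k) κ p = 0 ↔ f ∣ p) (hv : v 0 ≠ 0) {y : κ}
    (hy : ∀ p, aeval y (shearEquiv hv p) = algebraMap (MvPolynomial (Fin (n + 1)) k) κ p)
    {c : k} (hc : c ≠ 0) {g : (MvPolynomial (Fin n) k)[X]}
    (hfg : shearEquiv hv f = C (MvPolynomial.C c) * g) (p : (MvPolynomial (Fin n) k)[X]) :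
    aeval y p = 0 ↔ g ∣ p := by
  have hunit : IsUnit (C (MvPolynomial.C c) : (MvPolynomial (Fin n) k)[X]) :=
    (hc.isUnit.map MvPolynomial.C).map C
  rw [← (shearEquiv hv).apply_symm_apply p, hy, hker, ← hunit.mul_left_dvd, ← hfg]
  exact (map_dvd_iff (shearEquiv hv)).symm

variable [Algebra (MvPolynomial (Fin (n + 1)) k) E] [Algebra κ E]
  [IsScalarTower (MvPolynomial (Fin (n + 1)) k) κ E]
  {e : ℕ} {β : E} {q : (MvPolynomial (Fin (n + 1)) k)[X]}

theorem exists_algebraMap_eq_directionalDerivation_mul_trace_of_shearEquiv [CharZero k]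
    [FiniteDimensional κ E]
    (hker : ∀ p, algebraMap (MvPolynomial (Fin (n + 1)) k) κ p = 0 ↔ f ∣ p)
    (hcl : Subfield.closure (Set.range (algebraMap (MvPolynomial (Fin (n + 1)) k) κ)) = ⊤)
    (hv : v 0 ≠ 0)
    (htop : MvPolynomial.eval v (MvPolynomial.homogeneousComponent f.totalDegree f) ≠ 0)
    (hq : q.Monic) (hqe : ∀ i, (q.coeff i).totalDegree ≤ e) (hβ : aeval β q = 0)
    [Algebra (MvPolynomial (Fin n) k) κ] [Algebra (MvPolynomial (Fin n) k) E]
    [IsScalarTower (MvPolynomial (Fin n) k) κ E] {y : κ}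
    (hy : ∀ p, aeval y (shearEquiv hv p) = algebraMap (MvPolynomial (Fin (n + 1)) k) κ p) :
    ∃ T : MvPolynomial (Fin (n + 1)) k, T.totalDegree ≤ f.totalDegree + e ∧
      algebraMap _ κ T = algebraMap _ κ (directionalDerivation v f) * Algebra.trace κ E β := by
  obtain ⟨c, hc, g, hg, hgdeg, hgcoeff, hfg⟩ := exists_monic_shearEquiv hv htop
  rw [← hgdeg] at hgcoeff
  have hgker := aeval_eq_zero_iff_dvd_of_shearEquiv_eq hker hv hy hc hfg
  have hydeg := hasDegreeLE_one_of_aeval_eq_zero hg hgcoeff ((hgker g).2 dvd_rfl)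
  have hβdeg : HasDegreeLE k (Fin n) e β :=
    hasDegreeLE_of_monic_of_isRoot (hq.map (algebraMap _ E)) (fun i => by
      rw [coeff_map, IsScalarTower.algebraMap_apply _ κ E]
      exact (hasDegreeLE_algebraMap_of_aeval_shearEquiv hv hydeg hy (hqe i)).map
        (IsScalarTower.toAlgHom _ κ E)) (by rwa [IsRoot, eval_map_algebraMap])
  let L := FractionRing (MvPolynomial (Fin n) k)
  have : FaithfulSMul (MvPolynomial (Fin n) k) κ := (faithfulSMul_iff_algebraMap_injective _ _).2
    (algebraMap_injective_of_aeval_eq_zero_iff hg hgker)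
  let : Algebra L κ := FractionRing.liftAlgebra _ _
  let : Algebra L E := ((algebraMap κ E).comp (algebraMap L κ)).toAlgebra
  have : IsScalarTower L κ E := .of_algebraMap_eq fun _ => rfl
  have : IsScalarTower (MvPolynomial (Fin n) k) L E := .to₁₂₄ _ L κ E
  have hmin := minpoly_eq_map_of_aeval_eq_zero_iff L hg hgker
  have hint : IsIntegral L y := ⟨_, hg.map _, by
    rw [← hmin, ← aeval_def, minpoly.aeval]⟩
  have hgen : Algebra.adjoin L {y} = ⊤ := by
    refine adjoin_eq_top_of_closure_range_aeval (A := MvPolynomial (Fin n) k) L hint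
      (eq_top_iff.2 (hcl ▸ Subfield.closure_mono ?_))
    rintro _ ⟨p, rfl⟩
    exact ⟨_, hy p⟩
  have : FiniteDimensional L κ := ⟨by
    rw [← Algebra.top_toSubmodule, ← hgen]; exact hint.fg_adjoin_singleton⟩
  obtain ⟨Q, hQ, hQy⟩ := exists_aeval_eq_derivative_mul_trace hg hgcoeff hmin hgen hβdeg
  refine ⟨MvPolynomial.C c * (shearEquiv hv).symm Q, ?_, ?_⟩
  · refine (MvPolynomial.totalDegree_mul _ _).trans ?_
    rw [MvPolynomial.totalDegree_C, zero_add, ← hgdeg]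
    exact totalDegree_shearEquiv_symm_le hv hQ
  · rw [map_mul, ← hy, ← hy, ← hy, AlgEquiv.apply_symm_apply, hQy, ← derivative_shearEquiv, hfg,
      derivative_C_mul, shearEquiv_C, map_mul, mul_assoc]

theorem exists_algebraMap_eq_directionalDerivation_mul_trace [CharZero k] [FiniteDimensional κ E]
    (hker : ∀ p, algebraMap (MvPolynomial (Fin (n + 1)) k) κ p = 0 ↔ f ∣ p)
    (hcl : Subfield.closure (Set.range (algebraMap (MvPolynomial (Fin (n + 1)) k) κ)) = ⊤)
    (hq : q.Monic) (hqe : ∀ i, (q.coeff i).totalDegree ≤ e) (hβ : aeval β q = 0)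
    (v : Fin (n + 1) → k) :
    ∃ T : MvPolynomial (Fin (n + 1)) k, T.totalDegree ≤ f.totalDegree + e ∧
      algebraMap _ κ T = algebraMap _ κ (directionalDerivation v f) * Algebra.trace κ E β := by
  rcases eq_or_ne f 0 with rfl | hf
  · exact ⟨0, by simp, by simp⟩
  have hspan := span_eval_ne_zero (mul_ne_zero (MvPolynomial.X_ne_zero (0 : Fin (n + 1)))
    (homogeneousComponent_totalDegree_ne_zero hf))
  have hv : v ∈ Submodule.span k _ := hspan ▸ Submodule.mem_top
  induction hv using Submodule.span_induction with
  | mem v hv =>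
    rw [Set.mem_ofPred_eq, map_mul, MvPolynomial.eval_X] at hv
    have hv₀ := left_ne_zero_of_mul hv
    let : Algebra (MvPolynomial (Fin n) k) κ := ((algebraMap _ κ).comp
      (((shearEquiv hv₀).symm : _ →+* MvPolynomial (Fin (n + 1)) k).comp C)).toAlgebra
    let : Algebra (MvPolynomial (Fin n) k) E := ((algebraMap κ E).comp (algebraMap _ κ)).toAlgebra
    have : IsScalarTower (MvPolynomial (Fin n) k) κ E := .of_algebraMap_eq fun _ => rfl
    refine exists_algebraMap_eq_directionalDerivation_mul_trace_of_shearEquiv hker hcl hv₀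
      (right_ne_zero_of_mul hv) hq hqe hβ (y := algebraMap _ κ ((shearEquiv hv₀).symm X))
      fun p => ?_
    have h : (aeval (R := MvPolynomial (Fin n) k)
        (algebraMap _ κ ((shearEquiv hv₀).symm X))).toRingHom =
        (algebraMap (MvPolynomial (Fin (n + 1)) k) κ).comp ((shearEquiv hv₀).symm : _ →+* _) :=
      Polynomial.ringHom_ext (fun a => aeval_C _ a) (aeval_X _)
    exact (RingHom.congr_fun h _).trans
      (congrArg (algebraMap _ κ) ((shearEquiv hv₀).symm_apply_apply p))
  | zero =>
    have h := directionalDerivation_smul 0 (0 : Fin (n + 1) → k) f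
    rw [zero_smul, zero_smul] at h
    exact ⟨0, by simp, by simp [h]⟩
  | add v w _ _ hv hw =>
    obtain ⟨T, hT, hTv⟩ := hv
    obtain ⟨T', hT', hTw⟩ := hw
    refine ⟨T + T', (MvPolynomial.totalDegree_add _ _).trans (max_le hT hT'), ?_⟩
    rw [map_add, hTv, hTw, directionalDerivation_add, map_add, add_mul]
  | smul c v _ hv =>
    obtain ⟨T, hT, hTv⟩ := hv
    refine ⟨c • T, (MvPolynomial.totalDegree_smul_le _ _).trans hT, ?_⟩
    rw [directionalDerivation_smul, MvPolynomial.smul_eq_C_mul, MvPolynomial.smul_eq_C_mul, map_mul,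
      map_mul, hTv, mul_assoc]

theorem exists_algebraMap_eq_pderiv_mul_trace {n : ℕ} [Algebra (MvPolynomial (Fin n) k) κ]
    [Algebra (MvPolynomial (Fin n) k) E] [IsScalarTower (MvPolynomial (Fin n) k) κ E]
    {f : MvPolynomial (Fin n) k} {q : (MvPolynomial (Fin n) k)[X]} [CharZero k]
    [FiniteDimensional κ E] (hker : ∀ p, algebraMap (MvPolynomial (Fin n) k) κ p = 0 ↔ f ∣ p)
    (hcl : Subfield.closure (Set.range (algebraMap (MvPolynomial (Fin n) k) κ)) = ⊤)
    (hq : q.Monic) (hqe : ∀ i, (q.coeff i).totalDegree ≤ e) (hβ : aeval β q = 0) (l : Fin n) :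
    ∃ T : MvPolynomial (Fin n) k, T.totalDegree ≤ f.totalDegree + e ∧
      algebraMap _ κ T = algebraMap _ κ (MvPolynomial.pderiv l f) * Algebra.trace κ E β := by
  obtain _ | n := n
  · exact l.elim0
  · rw [← directionalDerivation_single]
    exact exists_algebraMap_eq_directionalDerivation_mul_trace hker hcl hq hqe hβ _

end DirectionalDerivative

section LocalizedSubalgebra

variable {A K : Type*} [CommRing A] [Field K] [Algebra A K]

/-- The localization of a subalgebra `B` of the field `K` at the complement of the prime ideal `(f)`
of the base ring: the elements having a multiple in `B` by an element of `A` not divisible by `f`.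
For `B = A[z]` it consists of the elements without pole along `f = 0`. -/
def localizedSubalgebra {f : A} (hf : Prime f) (B : Subalgebra A K) : Subalgebra A K where
  carrier := {u | ∃ b : A, ¬f ∣ b ∧ algebraMap A K b * u ∈ B}
  algebraMap_mem' a := ⟨1, hf.not_dvd_one, mul_mem (B.algebraMap_mem 1) (B.algebraMap_mem a)⟩
  mul_mem' := by
    rintro u v ⟨b, hb, hu⟩ ⟨c, hc, hv⟩
    refine ⟨b * c, hf.not_dvd_mul hb hc, ?_⟩
    rw [map_mul, mul_mul_mul_comm]
    exact mul_mem hu hv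
  add_mem' := by
    rintro u v ⟨b, hb, hu⟩ ⟨c, hc, hv⟩
    refine ⟨b * c, hf.not_dvd_mul hb hc, ?_⟩
    have h : algebraMap A K (b * c) * (u + v) =
        algebraMap A K c * (algebraMap A K b * u) + algebraMap A K b * (algebraMap A K c * v) := by
      rw [map_mul]
      ring
    rw [h]
    exact add_mem (mul_mem (B.algebraMap_mem c) hu) (mul_mem (B.algebraMap_mem b) hv)

variable {f : A} (hf : Prime f) {B : Subalgebra A K}

theorem le_localizedSubalgebra : B ≤ localizedSubalgebra hf B := fun _ hu =>
  ⟨1, hf.not_dvd_one, mul_mem (B.algebraMap_mem 1) hu⟩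

theorem mem_localizedSubalgebra_of_mul_mem {b : A} (hb : ¬f ∣ b) {u : K}
    (h : algebraMap A K b * u ∈ localizedSubalgebra hf B) : u ∈ localizedSubalgebra hf B := by
  obtain ⟨c, hc, hu⟩ := h
  exact ⟨c * b, hf.not_dvd_mul hc hb, by rwa [map_mul, mul_assoc]⟩

theorem derivation_mem_localizedSubalgebra {k : Type*} [CommRing k] [Algebra k K]
    (d : Derivation k K K) (hd : ∀ u ∈ B, d u ∈ localizedSubalgebra hf B) {u : K}
    (hu : u ∈ localizedSubalgebra hf B) : d u ∈ localizedSubalgebra hf B := by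
  obtain ⟨b, hb, hbu⟩ := hu
  refine mem_localizedSubalgebra_of_mul_mem hf hb ?_
  have h : algebraMap A K b * d u = d (algebraMap A K b * u) - u * d (algebraMap A K b) := by
    rw [d.leibniz, smul_eq_mul, smul_eq_mul]
    ring
  rw [h]
  exact sub_mem (hd _ hbu) (mul_mem ⟨b, hb, hbu⟩ (hd _ (B.algebraMap_mem b)))

end LocalizedSubalgebra

section SingleGenerator

variable {A K : Type*} [CommRing A] [Field K] [Algebra A K] {z : K}

theorem derivation_mem_of_mem_adjoin {k : Type*} [CommRing k] [Algebra k K] (d : Derivation k K K)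
    {S : Subalgebra A K} (hA : ∀ a : A, d (algebraMap A K a) ∈ S) (hzS : z ∈ S) (hz : d z ∈ S)
    {u : K} (hu : u ∈ Algebra.adjoin A {z}) : d u ∈ S := by
  have hS : Algebra.adjoin A {z} ≤ S := Algebra.adjoin_le (Set.singleton_subset_iff.2 hzS)
  induction hu using Algebra.adjoin_induction with
  | mem x hx => rwa [Set.mem_singleton_iff.1 hx]
  | algebraMap a => exact hA a
  | add x y _ _ hx hy => simpa only [map_add] using add_mem hx hy
  | mul x y hx hy hdx hdy =>
    rw [d.leibniz, smul_eq_mul, smul_eq_mul]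
    exact add_mem (mul_mem (hS hx) hdy) (mul_mem (hS hy) hdx)

theorem exists_degree_lt_aeval_eq [Nontrivial A] (hz : IsIntegral A z) {u : K}
    (hu : u ∈ Algebra.adjoin A {z}) :
    ∃ p : A[X], p.degree < (minpoly A z).natDegree ∧ aeval z p = u := by
  rw [Algebra.adjoin_singleton_eq_range_aeval] at hu
  obtain ⟨q, rfl⟩ := hu
  have hmonic := minpoly.monic hz
  refine ⟨q %ₘ minpoly A z, ?_, minpoly.aeval_modByMonic_minpoly q z⟩
  rw [← degree_eq_natDegree hmonic.ne_zero]
  exact degree_modByMonic_lt q hmonic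

theorem dvd_coeff_of_mem_localizedSubalgebra [IsDomain A] [IsIntegrallyClosed A]
    [FaithfulSMul A K] {f : A} (hf : Prime f) (hz : IsIntegral A z) {p : A[X]}
    (hp : p.degree < (minpoly A z).natDegree) {u : K}
    (hu : u ∈ localizedSubalgebra hf (Algebra.adjoin A {z}))
    (h : aeval z p = algebraMap A K f * u) (j : ℕ) : f ∣ p.coeff j := by
  obtain ⟨b, hb, hbu⟩ := hu
  obtain ⟨q, hq, hqu⟩ := exists_degree_lt_aeval_eq hz hbu
  have hroot : aeval z (b • p - f • q) = 0 := by
    rw [map_sub, map_smul, map_smul, h, hqu, Algebra.smul_def, Algebra.smul_def]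
    ring
  have hzero : b • p - f • q = 0 := by
    refine eq_zero_of_dvd_of_degree_lt ((minpoly.isIntegrallyClosed_dvd_iff hz _).1 hroot) ?_
    rw [degree_eq_natDegree (minpoly.ne_zero hz)]
    refine (degree_sub_le _ _).trans_lt (max_lt ?_ ?_)
    · exact (degree_smul_le b p).trans_lt hp
    · exact (degree_smul_le f q).trans_lt hq
  have hcoeff := congrArg (fun r => r.coeff j) hzero
  simp only [coeff_sub, coeff_smul, smul_eq_mul, coeff_zero, sub_eq_zero] at hcoeff
  exact (hf.dvd_or_dvd (Dvd.intro _ hcoeff.symm)).resolve_left hb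

theorem aeval_derivative_minpoly_ne_zero [IsDomain A] [IsIntegrallyClosed A] [FaithfulSMul A K]
    [CharZero A] (hz : IsIntegral A z) : aeval z (derivative (minpoly A z)) ≠ 0 := by
  rw [Ne, minpoly.isIntegrallyClosed_dvd_iff hz]
  intro h
  have hpos := minpoly.natDegree_pos hz
  exact hpos.ne' (derivative_eq_zero.1
    (eq_zero_of_dvd_of_natDegree_lt h (natDegree_derivative_lt hpos.ne')))

end SingleGenerator

section Reduction

variable {A κ : Type*} [CommRing A] [Field κ] [Algebra A κ]

theorem exists_aeval_eq_mul_aeval_of_map_dvd {K : Type*} [CommRing K] [Algebra A K] {f : A}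
    (hker : ∀ a, algebraMap A κ a = 0 → f ∣ a) {z : K} {F p : A[X]} (hF : F.Monic)
    (hFz : aeval z F = 0) (h : F.map (algebraMap A κ) ∣ p.map (algebraMap A κ)) :
    ∃ q : A[X], aeval z p = algebraMap A K f * aeval z q := by
  have hmod : (p %ₘ F).map (algebraMap A κ) = 0 := by
    rw [map_modByMonic _ hF]
    exact (modByMonic_eq_zero_iff_dvd (hF.map _)).2 h
  obtain ⟨q, hq⟩ := (C_dvd_iff_dvd_coeff f _).2 fun j =>
    hker ((p %ₘ F).coeff j) (by rw [← coeff_map, hmod, coeff_zero])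
  refine ⟨q, ?_⟩
  rw [← modByMonic_add_div p F, map_add, map_mul, hFz, zero_mul, add_zero, hq, map_mul, aeval_C]

theorem exists_map_eq_C_mul
    (hfrac : ∀ x : κ, ∃ a b, algebraMap A κ b ≠ 0 ∧ algebraMap A κ b * x = algebraMap A κ a)
    (p : κ[X]) : ∃ (b : A) (P : A[X]), algebraMap A κ b ≠ 0 ∧
      P.map (algebraMap A κ) = C (algebraMap A κ b) * p := by
  induction p using Polynomial.induction_on' with
  | add p q hp hq =>
    obtain ⟨b, P, hb, hP⟩ := hp
    obtain ⟨c, Q, hc, hQ⟩ := hq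
    refine ⟨b * c, C c * P + C b * Q, by rw [map_mul]; exact mul_ne_zero hb hc, ?_⟩
    simp only [Polynomial.map_add, Polynomial.map_mul, hP, hQ, map_C, map_mul]
    ring
  | monomial n x =>
    obtain ⟨a, b, hb, hx⟩ := hfrac x
    exact ⟨b, monomial n a, hb, by rw [map_monomial, ← hx, C_mul_monomial]⟩

end Reduction

section LieDerivative

variable {k K τ : Type*} [CommRing k] [Field K] [Algebra k K] [Fintype τ]

/-- The Lie derivative along the vector field `δ` of a differential one-form on a space with
coordinates `t m` and partial derivatives `d m`. The one-form `∑ m, x m • dt m` is encoded by its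
coefficient vector `x`, and `δ` acts by `L_δ (x • dt) = δ x • dt + x • d(δ t)`. -/
def lieDerivative (t : τ → K) (d : τ → Derivation k K K) (δ : Derivation k K K) :
    (τ → K) →ₗ[k] (τ → K) where
  toFun x l := δ (x l) + ∑ m, x m * d l (δ (t m))
  map_add' x y := by
    funext l
    simp only [Pi.add_apply, map_add, add_mul, Finset.sum_add_distrib]
    ring
  map_smul' c x := by
    funext l
    simp only [Pi.smul_apply, Derivation.map_smul, smul_mul_assoc, RingHom.id_apply, smul_add,
      Finset.smul_sum]

variable {t : τ → K} {d : τ → Derivation k K K} {δ : Derivation k K K}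

theorem lieDerivative_apply (x : τ → K) (l : τ) :
    lieDerivative t d δ x l = δ (x l) + ∑ m, x m * d l (δ (t m)) := rfl

theorem lieDerivative_smul (c : K) (x : τ → K) :
    lieDerivative t d δ (c • x) = δ c • x + c • lieDerivative t d δ x := by
  funext l
  simp only [lieDerivative_apply, Pi.add_apply, Pi.smul_apply, smul_eq_mul, Derivation.leibniz,
    mul_add, Finset.mul_sum, mul_assoc]
  ring

theorem mul_mul_lieDerivative_inv_smul {a : K} (ha : a ≠ 0) (x : τ → K) (l : τ) :
    a * (a * lieDerivative t d δ (a⁻¹ • x) l) = a * lieDerivative t d δ x l - x l * δ a := by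
  rw [lieDerivative_smul, Derivation.leibniz_inv, Pi.add_apply, Pi.smul_apply, Pi.smul_apply,
    smul_eq_mul, smul_eq_mul, smul_eq_mul]
  field_simp
  ring

theorem lieDerivative_differential (hcomm : ∀ l m a, d l (d m a) = d m (d l a))
    (hδ : ∀ a, δ a = ∑ m, δ (t m) * d m a) (a : K) :
    lieDerivative t d δ (fun l => d l a) = fun l => d l (δ a) := by
  funext l
  rw [lieDerivative_apply, hδ a, hδ (d l a), map_sum, ← Finset.sum_add_distrib]
  refine Finset.sum_congr rfl fun m _ => ?_
  rw [Derivation.leibniz, hcomm l m a, smul_eq_mul, smul_eq_mul]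

theorem lieDerivative_logDifferential (hcomm : ∀ l m a, d l (d m a) = d m (d l a))
    (hδ : ∀ a, δ a = ∑ m, δ (t m) * d m a) (a : K) :
    lieDerivative t d δ (a⁻¹ • fun l => d l a) = fun l => d l (a⁻¹ * δ a) := by
  rw [lieDerivative_smul, lieDerivative_differential hcomm hδ]
  funext l
  simp only [Pi.add_apply, Pi.smul_apply, smul_eq_mul, Derivation.leibniz, Derivation.leibniz_inv]
  ring

end LieDerivative

section Regularity

variable {k K τ : Type*} [CommRing k] [Field K] [Algebra k K] [Fintype τ] {t : τ → K}
  {d : τ → Derivation k K K} {δ : Derivation k K K} {S : Subring K}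

theorem mem_of_sq_mul_mem {a b c y : K} (ha : a ∈ S) (hb : b ∈ S) (hc : c ∈ S)
    (hunit : ∃ u ∈ S, ∃ v ∈ S, ∃ w ∈ S, u * a + v * b + w * c = 1)
    (hay : a ^ 2 * y ∈ S) (hby : b ^ 2 * y ∈ S) (hcy : c ^ 2 * y ∈ S) : y ∈ S := by
  obtain ⟨u, hu, v, hv, w, hw, h⟩ := hunit
  let s : Set S := {⟨a, ha⟩, ⟨b, hb⟩, ⟨c, hc⟩}
  have hs : Ideal.span s = ⊤ := by
    refine (Ideal.eq_top_iff_one _).2 ?_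
    have h1 : (1 : S) = ⟨u, hu⟩ * ⟨a, ha⟩ + ⟨v, hv⟩ * ⟨b, hb⟩ + ⟨w, hw⟩ * ⟨c, hc⟩ :=
      Subtype.ext h.symm
    rw [h1]
    refine add_mem (add_mem ?_ ?_) ?_ <;>
      exact Ideal.mul_mem_left _ _ (Ideal.subset_span (by simp only [s, Set.mem_insert_iff,
        Set.mem_singleton_iff, true_or, or_true]))
  have hy : y ∈ (1 : Submodule S K) := by
    refine Submodule.mem_of_span_eq_top_of_smul_pow_mem _ s hs y ?_
    rintro ⟨r, rfl | rfl | rfl⟩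
    · exact ⟨2, Submodule.mem_one.2 ⟨⟨_, hay⟩, rfl⟩⟩
    · exact ⟨2, Submodule.mem_one.2 ⟨⟨_, hby⟩, rfl⟩⟩
    · exact ⟨2, Submodule.mem_one.2 ⟨⟨_, hcy⟩, rfl⟩⟩
  obtain ⟨y', rfl⟩ := Submodule.mem_one.1 hy
  exact y'.2

theorem lieDerivative_mem (ht : ∀ m, t m ∈ S) (hd : ∀ l, ∀ u ∈ S, d l u ∈ S)
    (hδ : ∀ u ∈ S, δ u ∈ S) {x : τ → K} (hx : ∀ l, x l ∈ S) (l : τ) :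
    lieDerivative t d δ x l ∈ S :=
  add_mem (hδ _ (hx l)) (sum_mem fun m _ => mul_mem (hx m) (hd l _ (hδ _ (ht m))))

theorem sq_mul_lieDerivative_mem (ht : ∀ m, t m ∈ S) (hd : ∀ l, ∀ u ∈ S, d l u ∈ S)
    (hδ : ∀ u ∈ S, δ u ∈ S) {a : K} (ha : a ∈ S) {x : τ → K} (hx : ∀ l, a * x l ∈ S) (l : τ) :
    a ^ 2 * lieDerivative t d δ x l ∈ S := by
  have h : a ^ 2 * lieDerivative t d δ x l =
      a * lieDerivative t d δ (a • x) l - δ a * (a * x l) := by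
    rw [lieDerivative_smul, Pi.add_apply, Pi.smul_apply, Pi.smul_apply, smul_eq_mul, smul_eq_mul]
    ring
  rw [h]
  exact sub_mem (mul_mem ha (lieDerivative_mem ht hd hδ hx l)) (mul_mem (hδ a ha) (hx l))

theorem sq_mul_derivation_mem {D : Derivation k K K} (hD : ∀ u ∈ S, D u ∈ S) {a u : K}
    (ha : a ∈ S) (hu : a * u ∈ S) : a ^ 2 * D u ∈ S := by
  have h : a ^ 2 * D u = a * D (a * u) - D a * (a * u) := by
    rw [D.leibniz, smul_eq_mul, smul_eq_mul]
    ring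
  rw [h]
  exact sub_mem (mul_mem ha (hD _ hu)) (mul_mem (hD a ha) hu)

-- On the locus `b ≠ 0` the form `x` is the logarithmic differential of `f` up to a regular form,
-- and its Lie derivative is the differential of the regular function `δ f / f`.
theorem lieDerivative_mem_of_logDifferential (ht : ∀ m, t m ∈ S)
    (hd : ∀ l, ∀ u ∈ S, d l u ∈ S) (hδ : ∀ u ∈ S, δ u ∈ S)
    (hcomm : ∀ l m a, d l (d m a) = d m (d l a)) (hδt : ∀ a, δ a = ∑ m, δ (t m) * d m a)
    {a b f : K} (ha : a ∈ S) (hb : b ∈ S) (hf : f ∈ S)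
    (hunit : ∃ u ∈ S, ∃ v ∈ S, ∃ w ∈ S, u * a + v * b + w * f = 1) {x : τ → K}
    (hax : ∀ l, a * x l ∈ S) (hbx : ∀ l, b * (x l - f⁻¹ * d l f) ∈ S)
    (hbf : b * (f⁻¹ * δ f) ∈ S) (hfx : ∀ l, f * x l ∈ S) (l : τ) :
    lieDerivative t d δ x l ∈ S := by
  refine mem_of_sq_mul_mem ha hb hf hunit (sq_mul_lieDerivative_mem ht hd hδ ha hax l) ?_
    (sq_mul_lieDerivative_mem ht hd hδ hf hfx l)
  set ω : τ → K := f⁻¹ • fun l => d l f with hω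
  have hsplit : lieDerivative t d δ x l =
      lieDerivative t d δ (x - ω) l + d l (f⁻¹ * δ f) := by
    rw [map_sub, hω, lieDerivative_logDifferential hcomm hδt, Pi.sub_apply, sub_add_cancel]
  rw [hsplit, mul_add]
  exact add_mem (sq_mul_lieDerivative_mem ht hd hδ hb hbx l)
    (sq_mul_derivation_mem (hd l) hb hbf)

end Regularity

section PartialDerivatives

variable {k K σ : Type*} [Field k] [Field K] [Algebra (MvPolynomial σ k) K] [Algebra k K]
  [IsScalarTower k (MvPolynomial σ k) K]

theorem derivation_eq_of_eqOn_base {A : Type*} [CommRing A] [Algebra k A] [Algebra A K]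
    [IsScalarTower k A K] [Algebra.FormallyUnramified A K] {D D' : Derivation k K K}
    (h : ∀ a : A, D (algebraMap A K a) = D' (algebraMap A K a)) : D = D' := by
  have hbase (a : A) : (D - D') (algebraMap A K a) = 0 := by
    rw [Derivation.sub_apply, h, sub_self]
  have hsmul (a : A) (u : K) : (D - D') (a • u) = a • (D - D') u := by
    rw [Algebra.smul_def, Derivation.leibniz, hbase, smul_zero, add_zero, smul_eq_mul,
      ← Algebra.smul_def]
  let E : Derivation A K K := Derivation.mk'
    { toFun := D - D'
      map_add' := map_add (D - D')
      map_smul' := hsmul } (D - D').leibniz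
  have hE : E = 0 := (KaehlerDifferential.linearMapEquivDerivation A K).symm.injective
    (Subsingleton.elim _ _)
  ext u
  exact sub_eq_zero.1 (DFunLike.congr_fun hE u)

theorem pderiv_comm (l m : σ) (p : MvPolynomial σ k) :
    MvPolynomial.pderiv l (MvPolynomial.pderiv m p) =
      MvPolynomial.pderiv m (MvPolynomial.pderiv l p) := by
  classical
  have h : ⁅MvPolynomial.pderiv (R := k) l, MvPolynomial.pderiv (R := k) m⁆ = 0 := by
    refine MvPolynomial.derivation_ext fun i => ?_
    rw [Derivation.commutator_apply]
    simp only [MvPolynomial.pderiv_X, Pi.single_apply]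
    split_ifs <;> simp
  have hp := DFunLike.congr_fun h p
  rwa [Derivation.commutator_apply, Derivation.zero_apply, sub_eq_zero] at hp

theorem derivation_algebraMap_eq_sum [Fintype σ] (δ : Derivation k K K) (p : MvPolynomial σ k) :
    δ (algebraMap _ K p) = ∑ m, δ (algebraMap _ K (MvPolynomial.X m : MvPolynomial σ k)) *
      algebraMap _ K (MvPolynomial.pderiv m p) := by
  classical
  let E : Derivation k (MvPolynomial σ k) K :=
    ∑ m, δ (algebraMap _ K (MvPolynomial.X m : MvPolynomial σ k)) •
      (Algebra.linearMap (MvPolynomial σ k) K).compDer (MvPolynomial.pderiv m)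
  have hE (q : MvPolynomial σ k) :
      E q = ∑ m, δ (algebraMap _ K (MvPolynomial.X m : MvPolynomial σ k)) *
        algebraMap _ K (MvPolynomial.pderiv m q) := by
    rw [← Derivation.coeFnAddMonoidHom_apply, map_sum, Finset.sum_apply]
    rfl
  have hX : δ.compAlgebraMap (MvPolynomial σ k) = E := by
    refine MvPolynomial.derivation_ext fun i => ?_
    simp [hE, MvPolynomial.pderiv_X, Pi.single_apply, apply_ite]
  rw [← hE]
  exact DFunLike.congr_fun hX p

variable {d : σ → Derivation k K K}

theorem derivation_comm_of_pderiv [Algebra.FormallyUnramified (MvPolynomial σ k) K]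
    (hd : ∀ l p, d l (algebraMap (MvPolynomial σ k) K p) = algebraMap _ K (MvPolynomial.pderiv l p))
    (l m : σ) (u : K) : d l (d m u) = d m (d l u) := by
  have h : ⁅d l, d m⁆ = 0 := derivation_eq_of_eqOn_base (A := MvPolynomial σ k) fun p => by
    rw [Derivation.commutator_apply, hd, hd, hd, hd, pderiv_comm, sub_self, Derivation.zero_apply]
  have hu := DFunLike.congr_fun h u
  rwa [Derivation.commutator_apply, Derivation.zero_apply, sub_eq_zero] at hu

theorem derivation_eq_sum_mul_of_pderiv [Fintype σ]
    [Algebra.FormallyUnramified (MvPolynomial σ k) K]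
    (hd : ∀ l p, d l (algebraMap (MvPolynomial σ k) K p) = algebraMap _ K (MvPolynomial.pderiv l p))
    (δ : Derivation k K K) (u : K) :
    δ u = ∑ m, δ (algebraMap _ K (MvPolynomial.X m : MvPolynomial σ k)) * d m u := by
  set E : Derivation k K K := ∑ m, δ (algebraMap _ K (MvPolynomial.X m : MvPolynomial σ k)) • d m
  have hE (v : K) :
      E v = ∑ m, δ (algebraMap _ K (MvPolynomial.X m : MvPolynomial σ k)) * d m v := by
    rw [← Derivation.coeFnAddMonoidHom_apply, map_sum, Finset.sum_apply]
    rfl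
  rw [← hE]
  congr 1
  refine derivation_eq_of_eqOn_base (A := MvPolynomial σ k) fun p => ?_
  rw [hE, derivation_algebraMap_eq_sum]
  exact Finset.sum_congr rfl fun m _ => by rw [hd]

end PartialDerivatives

section PoleCancellation

variable {A K κ : Type*} [CommRing A] [Field K] [Field κ] [Algebra A K] [Algebra A κ] {f : A}
  {z : K} {F : A[X]} {S : Subalgebra A K}

theorem aeval_mem_of_mem (hz : z ∈ S) (p : A[X]) : aeval z p ∈ S :=
  Algebra.adjoin_singleton_le hz (aeval_mem_adjoin_singleton A z)

theorem aeval_mul_inv_mul_mem_of_map_dvd (hz : z ∈ S) (hf : algebraMap A K f ≠ 0)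
    (hker : ∀ a, algebraMap A κ a = 0 → f ∣ a) (hF : F.Monic) (hFz : aeval z F = 0) {p q : A[X]}
    (h : F.map (algebraMap A κ) ∣ (p * q).map (algebraMap A κ)) {w : K} (hw : w ∈ S) :
    aeval z p * ((algebraMap A K f)⁻¹ * (aeval z q * w)) ∈ S := by
  obtain ⟨r, hr⟩ := exists_aeval_eq_mul_aeval_of_map_dvd (K := K) hker hF hFz h
  rw [map_mul] at hr
  rw [mul_left_comm, ← mul_assoc (aeval z p), hr, mul_assoc, inv_mul_cancel_left₀ hf]
  exact mul_mem (aeval_mem_of_mem hz r) hw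

variable {g h : κ[X]} {G H : A[X]} {b c : A}

-- Modulo `f` the unit `aeval z (derivative F)` is a combination of `g` and `h`.
theorem exists_lift_comaximal (hz : z ∈ S) (hker : ∀ a, algebraMap A κ a = 0 → f ∣ a) (hF : F.Monic)
    (hFz : aeval z F = 0) (hgh : F.map (algebraMap A κ) = g * h)
    (hG : G.map (algebraMap A κ) = C (algebraMap A κ b) * g)
    (hH : H.map (algebraMap A κ) = C (algebraMap A κ c) * h)
    {w : K} (hwS : w ∈ S) (hw : algebraMap A K (b * c) * (w * aeval z (derivative F)) = 1) :
    ∃ u ∈ S, ∃ v ∈ S, ∃ y ∈ S, u * aeval z G + v * aeval z H + y * algebraMap A K f = 1 := by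
  set r : A[X] := C (b * c) * derivative F - (derivative G * H + G * derivative H)
  have hr : r.map (algebraMap A κ) = 0 := by
    simp only [r, Polynomial.map_sub, Polynomial.map_mul, Polynomial.map_add, ← derivative_map,
      hG, hH, hgh, map_C, map_mul, derivative_C, derivative_mul]
    ring
  obtain ⟨y, hy⟩ := exists_aeval_eq_mul_aeval_of_map_dvd (K := K) hker hF hFz (hr ▸ dvd_zero _)
  refine ⟨w * aeval z (derivative H), mul_mem hwS (aeval_mem_of_mem hz _),
    w * aeval z (derivative G), mul_mem hwS (aeval_mem_of_mem hz _),
    w * aeval z y, mul_mem hwS (aeval_mem_of_mem hz _), ?_⟩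
  have hrz : aeval z r = algebraMap A K (b * c) * aeval z (derivative F) -
      (aeval z (derivative G) * aeval z H + aeval z G * aeval z (derivative H)) := by
    simp only [r, map_sub, map_add, map_mul, aeval_C]
  linear_combination hw + w * hrz - w * hy

variable {k τ : Type*} [CommRing k] [Algebra k K] [Fintype τ] {t : τ → K}
  {d : τ → Derivation k K K} {δ : Derivation k K K} {a : τ → A} {p : τ → A[X]}

-- The form is regular away from the component `g = 0` of the fibre over `f = 0`; that component is
-- disjoint from `h = 0`, and away from the latter the form is `d f / f` up to a regular form.
theorem lieDerivative_mem_of_map_eq [FaithfulSMul A K] (hz : z ∈ S)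
    (hdiv : ∀ (b : A) (u : K), ¬f ∣ b → algebraMap A K b * u ∈ S → u ∈ S) (hf : f ≠ 0)
    (hker : ∀ a, algebraMap A κ a = 0 ↔ f ∣ a)
    (hfrac : ∀ x : κ, ∃ a b, algebraMap A κ b ≠ 0 ∧ algebraMap A κ b * x = algebraMap A κ a)
    (hF : F.Monic) (hFz : aeval z F = 0) {w : K} (hwS : w ∈ S)
    (hw : w * aeval z (derivative F) = 1) (ht : ∀ m, t m ∈ S) (hd : ∀ l, ∀ u ∈ S, d l u ∈ S)
    (hδ : ∀ u ∈ S, δ u ∈ S) (hcomm : ∀ l m u, d l (d m u) = d m (d l u))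
    (hδt : ∀ u, δ u = ∑ m, δ (t m) * d m u) (hgh : F.map (algebraMap A κ) = g * h)
    (hdf : ∀ l, d l (algebraMap A K f) = algebraMap A K (a l))
    (hp : ∀ l, (p l).map (algebraMap A κ) = C (algebraMap A κ (a l)) * (derivative g * h))
    {D : A} (hD : ¬f ∣ D) {q : A[X]} (hq : aeval z q = algebraMap A K D * δ (algebraMap A K f))
    (hgq : g ∣ q.map (algebraMap A κ)) (l : τ) :
    lieDerivative t d δ (fun l => (algebraMap A K f)⁻¹ * (aeval z (p l) * w)) l ∈ S := by
  have hf0 : algebraMap A K f ≠ 0 := (FaithfulSMul.algebraMap_eq_zero_iff A K).not.2 hf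
  obtain ⟨b, G, hb, hG⟩ := exists_map_eq_C_mul hfrac g
  obtain ⟨c, H, hc, hH⟩ := exists_map_eq_C_mul hfrac h
  have hbc : ¬f ∣ b * c := by
    rw [← hker, map_mul]
    exact mul_ne_zero hb hc
  have hbc0 : algebraMap A K (b * c) ≠ 0 :=
    (FaithfulSMul.algebraMap_eq_zero_iff A K).not.2 fun h0 => hbc (h0 ▸ dvd_zero f)
  have hcancel {p q : A[X]} (h : F.map (algebraMap A κ) ∣ (p * q).map (algebraMap A κ)) {w : K}
      (hw : w ∈ S) : aeval z p * ((algebraMap A K f)⁻¹ * (aeval z q * w)) ∈ S :=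
    aeval_mul_inv_mul_mem_of_map_dvd hz hf0 (fun a => (hker a).1) hF hFz h hw
  refine lieDerivative_mem_of_logDifferential (S := S.toSubring) (a := aeval z G) (b := aeval z H)
    ht hd hδ hcomm hδt (aeval_mem_of_mem hz G) (aeval_mem_of_mem hz H) (S.algebraMap_mem f)
    (exists_lift_comaximal (w := (algebraMap A K (b * c))⁻¹ * w) hz (fun a => (hker a).1) hF hFz
      hgh hG hH (hdiv _ _ hbc (by rwa [mul_inv_cancel_left₀ hbc0]))
      (by rw [mul_assoc, mul_inv_cancel_left₀ hbc0, hw])) ?_ ?_ ?_ ?_ l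
  · refine fun l => hcancel ?_ hwS
    rw [hgh, Polynomial.map_mul, hG, hp]
    exact ⟨C (algebraMap A κ b) * C (algebraMap A κ (a l)) * derivative g, by ring⟩
  · intro l
    have hx : aeval z (p l - C (a l) * derivative F) * w =
        aeval z (p l) * w - d l (algebraMap A K f) := by
      rw [map_sub, map_mul, aeval_C, hdf]
      linear_combination -algebraMap A K (a l) * hw
    rw [← mul_sub, ← hx]
    refine hcancel ?_ hwS
    rw [Polynomial.map_mul, Polynomial.map_sub, Polynomial.map_mul, hH, hp, ← derivative_map, hgh,
      derivative_mul, map_C]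
    exact ⟨-C (algebraMap A κ c) * C (algebraMap A κ (a l)) * derivative h, by ring⟩
  · refine hdiv D _ hD ?_
    have hq_dvd : F.map (algebraMap A κ) ∣ (H * q).map (algebraMap A κ) := by
      rw [hgh, Polynomial.map_mul, hH, mul_assoc, mul_comm g]
      exact (mul_dvd_mul_left h hgq).mul_left _
    rw [mul_left_comm, mul_left_comm _ _ (δ _), ← hq, ← mul_one (aeval z q)]
    exact hcancel hq_dvd S.one_mem
  · intro l
    rw [mul_inv_cancel_left₀ hf0]
    exact mul_mem (aeval_mem_of_mem hz _) hwS

end PoleCancellation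

section FormCoefficients

section MinpolyDiv

variable {A R κ E : Type*} [CommRing A] [CommRing R] [Field κ] [Field E] [Algebra A R]
  [Algebra A κ] [Algebra κ E] [Algebra A E] [Algebra R E] [IsScalarTower A κ E]
  [IsScalarTower A R E] {z : R} {h : κ[X]}

theorem map_minpolyDiv_of_map_minpoly
    (hh : (minpoly A z).map (algebraMap A κ) = minpoly κ (algebraMap R E z) * h) :
    (minpolyDiv A z).map (algebraMap R E) =
      minpolyDiv κ (algebraMap R E z) * h.map (algebraMap κ E) := by
  refine mul_right_cancel₀ (X_sub_C_ne_zero (algebraMap R E z)) ?_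
  have hz := congrArg (Polynomial.map (algebraMap R E)) (minpolyDiv_spec A z)
  rw [map_map, ← IsScalarTower.algebraMap_eq A R E, IsScalarTower.algebraMap_eq A κ E, ← map_map,
    hh, Polynomial.map_mul, Polynomial.map_mul, Polynomial.map_sub, map_X, map_C] at hz
  rw [hz, ← minpolyDiv_spec κ]
  ring

theorem trace_coeff_minpolyDiv_of_map_minpoly [CharZero κ] [FiniteDimensional κ E]
    (hz : Algebra.adjoin κ {algebraMap R E z} = ⊤)
    (hh : (minpoly A z).map (algebraMap A κ) = minpoly κ (algebraMap R E z) * h) (j : ℕ) :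
    Algebra.trace κ E (algebraMap R E ((minpolyDiv A z).coeff j)) =
      (derivative (minpoly κ (algebraMap R E z)) * h).coeff j := by
  rw [← coeff_map, map_minpolyDiv_of_map_minpoly hh, coeff_mul, map_sum, coeff_mul]
  refine Finset.sum_congr rfl fun i _ => ?_
  rw [coeff_map, mul_comm, ← Algebra.smul_def, map_smul, trace_coeff_minpolyDiv hz, smul_eq_mul,
    mul_comm]

end MinpolyDiv

variable {k R : Type*} [Field k] [CommRing R]

theorem exists_totalDegree_le_of_isIntegral {σ : Type*} [Algebra (MvPolynomial σ k) R]
    [Algebra.IsIntegral (MvPolynomial σ k) R] (s : Finset R) :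
    ∃ e, ∀ u ∈ s, ∃ q : (MvPolynomial σ k)[X], q.Monic ∧ (∀ i, (q.coeff i).totalDegree ≤ e) ∧
      aeval u q = 0 := by
  choose q hq hqu using fun u : R => Algebra.IsIntegral.isIntegral (R := MvPolynomial σ k) u
  let D (u : R) : ℕ := (q u).support.sup fun i => ((q u).coeff i).totalDegree
  refine ⟨s.sup D, fun u hu => ⟨q u, hq u, fun i => ?_, hqu u⟩⟩
  by_cases hi : (q u).coeff i = 0
  · rw [hi, MvPolynomial.totalDegree_zero]
    exact zero_le
  · exact (Finset.le_sup (f := fun i => ((q u).coeff i).totalDegree) (mem_support_iff.2 hi)).trans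
      (Finset.le_sup (f := D) hu)

theorem exists_totalDegree_le_coeff_of_isIntegral {σ : Type*} [Algebra (MvPolynomial σ k) R]
    [Algebra.IsIntegral (MvPolynomial σ k) R] (B : R[X]) :
    ∃ e, ∀ j, ∃ q : (MvPolynomial σ k)[X], q.Monic ∧ (∀ i, (q.coeff i).totalDegree ≤ e) ∧
      aeval (B.coeff j) q = 0 := by
  classical
  obtain ⟨e, he⟩ := exists_totalDegree_le_of_isIntegral (k := k) (σ := σ) (insert 0 B.coeffs)
  refine ⟨e, fun j => he _ ?_⟩
  by_cases hj : B.coeff j = 0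
  · exact hj ▸ Finset.mem_insert_self _ _
  · exact Finset.mem_insert_of_mem (coeff_mem_coeffs hj)

theorem exists_map_eq_C_pderiv_mul {κ E : Type*} [Field κ] [Field E] [CharZero k] {n : ℕ}
    [Algebra (MvPolynomial (Fin n) k) R] [Algebra (MvPolynomial (Fin n) k) κ] [Algebra κ E]
    [Algebra (MvPolynomial (Fin n) k) E] [Algebra R E] [IsScalarTower (MvPolynomial (Fin n) k) κ E]
    [IsScalarTower (MvPolynomial (Fin n) k) R E] [FiniteDimensional κ E]
    {f : MvPolynomial (Fin n) k} (hker : ∀ p, algebraMap (MvPolynomial (Fin n) k) κ p = 0 ↔ f ∣ p)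
    (hcl : Subfield.closure (Set.range (algebraMap (MvPolynomial (Fin n) k) κ)) = ⊤) {z : R}
    (hzint : IsIntegral (MvPolynomial (Fin n) k) z)
    (hz : Algebra.adjoin κ {algebraMap R E z} = ⊤) {h : κ[X]}
    (hh : (minpoly (MvPolynomial (Fin n) k) z).map (algebraMap (MvPolynomial (Fin n) k) κ) =
      minpoly κ (algebraMap R E z) * h) {e : ℕ}
    (he : ∀ j, ∃ q : (MvPolynomial (Fin n) k)[X], q.Monic ∧ (∀ i, (q.coeff i).totalDegree ≤ e) ∧
      aeval ((minpolyDiv (MvPolynomial (Fin n) k) z).coeff j) q = 0) (l : Fin n) :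
    ∃ p : (MvPolynomial (Fin n) k)[X],
      p.degree < (minpoly (MvPolynomial (Fin n) k) z).natDegree ∧
      (∀ j, (p.coeff j).totalDegree ≤ f.totalDegree + e) ∧
      p.map (algebraMap (MvPolynomial (Fin n) k) κ) =
        C (algebraMap _ κ (MvPolynomial.pderiv l f)) *
          (derivative (minpoly κ (algebraMap R E z)) * h) := by
  classical
  have : CharZero κ := charZero_of_injective_ringHom
    (f := (algebraMap (MvPolynomial (Fin n) k) κ).comp MvPolynomial.C) (RingHom.injective _)
  have hT (j : ℕ) : ∃ T : MvPolynomial (Fin n) k, T.totalDegree ≤ f.totalDegree + e ∧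
      algebraMap _ κ T = algebraMap _ κ (MvPolynomial.pderiv l f) *
        (derivative (minpoly κ (algebraMap R E z)) * h).coeff j := by
    obtain ⟨q, hq, hqe, hq0⟩ := he j
    rw [← trace_coeff_minpolyDiv_of_map_minpoly hz hh]
    refine exists_algebraMap_eq_pderiv_mul_trace hker hcl hq hqe ?_ l
    rw [aeval_algebraMap_apply, hq0, map_zero]
  have hdeg : (derivative (minpoly κ (algebraMap R E z)) * h).degree <
      (minpoly (MvPolynomial (Fin n) k) z).natDegree := by
    have hmonic := minpoly.monic hzint
    have hh0 : h ≠ 0 := right_ne_zero_of_mul (hh ▸ (hmonic.map _).ne_zero)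
    rw [← hmonic.natDegree_map (algebraMap _ κ), ← degree_eq_natDegree (hmonic.map _).ne_zero, hh,
      degree_mul, degree_mul]
    exact WithBot.add_lt_add_right (degree_ne_bot.2 hh0)
      (degree_derivative_lt (left_ne_zero_of_mul (hh ▸ (hmonic.map _).ne_zero)))
  choose T hTdeg hT using hT
  refine ⟨ofFn _ fun i => T i, ofFn_degree_lt _, fun j => ?_, ext fun j => ?_⟩
  · rcases lt_or_ge j (minpoly (MvPolynomial (Fin n) k) z).natDegree with hj | hj
    · rw [ofFn_coeff_eq_val_of_lt _ hj]
      exact hTdeg j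
    · rw [ofFn_coeff_eq_zero_of_ge _ hj, MvPolynomial.totalDegree_zero]
      exact zero_le
  · rw [coeff_map, coeff_C_mul]
    rcases lt_or_ge j (minpoly (MvPolynomial (Fin n) k) z).natDegree with hj | hj
    · rw [ofFn_coeff_eq_val_of_lt _ hj, hT]
    · rw [ofFn_coeff_eq_zero_of_ge _ hj, map_zero, coeff_eq_zero_of_degree_lt
        (hdeg.trans_le (by exact_mod_cast hj)), mul_zero]

end FormCoefficients

section PartialDerivativeDegree

variable {R σ : Type*} [CommSemiring R]

theorem totalDegree_pderiv_lt {l : σ} {p : MvPolynomial σ R} (hp : MvPolynomial.pderiv l p ≠ 0) :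
    (MvPolynomial.pderiv l p).totalDegree < p.totalDegree := by
  have hlt : ∀ m ∈ (MvPolynomial.pderiv l p).support, (m.sum fun _ e => e) < p.totalDegree := by
    intro m hm
    rw [MvPolynomial.mem_support_iff, MvPolynomial.coeff_pderiv] at hm
    have hle := MvPolynomial.le_totalDegree
      (MvPolynomial.mem_support_iff.2 (left_ne_zero_of_mul hm))
    rw [Finsupp.sum_add_index' (fun _ => rfl) (fun _ _ _ => rfl),
      Finsupp.sum_single_index rfl] at hle
    exact hle
  obtain ⟨m, hm⟩ := MvPolynomial.support_nonempty.2 hp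
  exact (Finset.sup_lt_iff (bot_le.trans_lt (hlt m hm))).2 hlt

theorem totalDegree_pderiv_le (l : σ) (p : MvPolynomial σ R) :
    (MvPolynomial.pderiv l p).totalDegree ≤ p.totalDegree := by
  by_cases hp : MvPolynomial.pderiv l p = 0
  · rw [hp, MvPolynomial.totalDegree_zero]
    exact zero_le
  · exact (totalDegree_pderiv_lt hp).le

end PartialDerivativeDegree

section PartialDerivativeDomain

variable {R σ : Type*} [CommRing R] [IsDomain R]

theorem not_dvd_pderiv {l : σ} {p : MvPolynomial σ R} (hp : MvPolynomial.pderiv l p ≠ 0) :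
    ¬p ∣ MvPolynomial.pderiv l p := fun h =>
  (totalDegree_pderiv_lt hp).not_ge (MvPolynomial.totalDegree_le_of_dvd_of_isDomain h hp)

theorem eq_C_of_forall_pderiv_eq_zero [CharZero R] {p : MvPolynomial σ R}
    (hp : ∀ l, MvPolynomial.pderiv l p = 0) : p = MvPolynomial.C (p.coeff 0) := by
  classical
  ext m
  rw [MvPolynomial.coeff_C]
  split_ifs with hm
  · rw [hm]
  obtain ⟨l, hl⟩ := DFunLike.ne_iff.1 (Ne.symm hm)
  have hadd : m - Finsupp.single l 1 + Finsupp.single l 1 = m :=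
    tsub_add_cancel_of_le (Finsupp.single_le_iff.2 (Nat.one_le_iff_ne_zero.2 hl))
  have hcoeff := congrArg (MvPolynomial.coeff (m - Finsupp.single l 1)) (hp l)
  rw [MvPolynomial.coeff_pderiv, hadd, MvPolynomial.coeff_zero] at hcoeff
  exact (mul_eq_zero.1 hcoeff).resolve_right (Nat.cast_add_one_ne_zero _)

theorem exists_pderiv_ne_zero {k : Type*} [Field k] [CharZero k] {p : MvPolynomial σ k}
    (hp : Irreducible p) : ∃ l, MvPolynomial.pderiv l p ≠ 0 := by
  by_contra! h
  have hC := eq_C_of_forall_pderiv_eq_zero h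
  have hc : p.coeff 0 ≠ 0 := fun h0 => hp.ne_zero (by rw [hC, h0, map_zero])
  exact hp.not_isUnit (hC ▸ (isUnit_iff_ne_zero.2 hc).map MvPolynomial.C)

end PartialDerivativeDomain

section BoundedDegree

variable (k σ : Type*) [Field k] {K : Type*} [Field K] [Algebra k K] [Algebra (MvPolynomial σ k) K]
  [IsScalarTower k (MvPolynomial σ k) K]

/-- The space of elements of `K` that are polynomials in `z` of degree less than `d`, with
coefficients in `k[σ]` of total degree at most `N`. -/
noncomputable def boundedDegree (z : K) (d N : ℕ) : Submodule k K :=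
  ⨆ i : Fin d, (MvPolynomial.restrictTotalDegree σ k N).map
    (LinearMap.mulRight k (z ^ (i : ℕ)) ∘ₗ (IsScalarTower.toAlgHom k _ K).toLinearMap)

instance [Finite σ] (z : K) (d N : ℕ) : FiniteDimensional k (boundedDegree k σ z d N) :=
  Submodule.finite_iSup _

variable {k σ}

theorem mem_boundedDegree_iff {z u : K} {d N : ℕ} : u ∈ boundedDegree k σ z d N ↔
    ∃ p : (MvPolynomial σ k)[X], p.degree < d ∧ (∀ j, (p.coeff j).totalDegree ≤ N) ∧
      aeval z p = u := by
  classical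
  constructor
  · intro hu
    obtain ⟨y, hy, rfl⟩ := (Submodule.mem_iSup_iff_exists_finsupp _ _).1 hu
    choose c hc hcy using hy
    refine ⟨ofFn d c, ofFn_degree_lt _, fun j => ?_, ?_⟩
    · by_cases hj : j < d
      · rw [ofFn_coeff_eq_val_of_lt _ hj]
        exact (MvPolynomial.mem_restrictTotalDegree _ _ _).1 (hc ⟨j, hj⟩)
      · rw [ofFn_coeff_eq_zero_of_ge _ (not_lt.1 hj), MvPolynomial.totalDegree_zero]
        exact zero_le
    · rw [Finsupp.sum_fintype _ _ fun _ => rfl, ofFn_eq_sum_monomial, map_sum]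
      exact Finset.sum_congr rfl fun i _ => by rw [aeval_monomial, ← hcy i]; rfl
  · rintro ⟨p, hp, hdeg, rfl⟩
    rw [aeval_eq_sum_range]
    refine sum_mem fun i _ => ?_
    by_cases hi : i < d
    · exact Submodule.mem_iSup_of_mem ⟨i, hi⟩ ⟨p.coeff i,
        (MvPolynomial.mem_restrictTotalDegree _ _ _).2 (hdeg i), (Algebra.smul_def _ _).symm⟩
    · rw [coeff_eq_zero_of_degree_lt (hp.trans_le (by exact_mod_cast not_lt.1 hi)), zero_smul]
      exact zero_mem _

theorem algebraMap_mul_mem_boundedDegree {z u : K} {d N M : ℕ} {a : MvPolynomial σ k}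
    (ha : a.totalDegree + N ≤ M) (hu : u ∈ boundedDegree k σ z d N) :
    algebraMap _ K a * u ∈ boundedDegree k σ z d M := by
  obtain ⟨p, hp, hdeg, rfl⟩ := mem_boundedDegree_iff.1 hu
  refine mem_boundedDegree_iff.2 ⟨a • p, (degree_smul_le a p).trans_lt hp, fun j => ?_, ?_⟩
  · rw [coeff_smul, smul_eq_mul]
    exact (MvPolynomial.totalDegree_mul _ _).trans ((Nat.add_le_add_left (hdeg j) _).trans ha)
  · rw [map_smul, Algebra.smul_def]

variable [FaithfulSMul (MvPolynomial σ k) K]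

theorem mem_boundedDegree_of_algebraMap_mul_mem {z u : K} (hz : IsIntegral (MvPolynomial σ k) z)
    {f : MvPolynomial σ k} (hf : Prime f)
    (hu : u ∈ localizedSubalgebra hf (Algebra.adjoin (MvPolynomial σ k) {z})) {N : ℕ}
    (h : algebraMap _ K f * u ∈
      boundedDegree k σ z (minpoly (MvPolynomial σ k) z).natDegree (f.totalDegree + N)) :
    u ∈ boundedDegree k σ z (minpoly (MvPolynomial σ k) z).natDegree N := by
  obtain ⟨p, hp, hdeg, hpu⟩ := mem_boundedDegree_iff.1 h
  obtain ⟨q, rfl⟩ :=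
    (C_dvd_iff_dvd_coeff f p).2 (dvd_coeff_of_mem_localizedSubalgebra hf hz hp hu hpu)
  have hq : ∀ j, (q.coeff j).totalDegree ≤ N := by
    intro j
    by_cases hqj : q.coeff j = 0
    · rw [hqj, MvPolynomial.totalDegree_zero]
      exact zero_le
    · have hj := hdeg j
      rw [coeff_C_mul, MvPolynomial.totalDegree_mul_of_isDomain hf.ne_zero hqj] at hj
      exact Nat.le_of_add_le_add_left hj
  refine mem_boundedDegree_iff.2 ⟨q, ?_, hq, ?_⟩
  · rwa [degree_C_mul hf.ne_zero] at hp
  · rw [map_mul, aeval_C] at hpu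
    exact mul_left_cancel₀ ((FaithfulSMul.algebraMap_eq_zero_iff _ K).not.2 hf.ne_zero) hpu

end BoundedDegree

section DegreeBound

variable {k σ K : Type*} [Field k] [Field K] [Algebra k K] [Algebra (MvPolynomial σ k) K]
  [IsScalarTower k (MvPolynomial σ k) K] {z v : K} {n M N : ℕ}

theorem aeval_mul_mem_boundedDegree (hv : ∀ i < n, z ^ i * v ∈ boundedDegree k σ z n N)
    {p : (MvPolynomial σ k)[X]} (hp : p.degree < n) (hdeg : ∀ j, (p.coeff j).totalDegree ≤ M) :
    aeval z p * v ∈ boundedDegree k σ z n (M + N) := by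
  rw [aeval_eq_sum_range, Finset.sum_mul]
  refine sum_mem fun i _ => ?_
  rw [Algebra.smul_def, mul_assoc]
  by_cases hi : i < n
  · exact algebraMap_mul_mem_boundedDegree (Nat.add_le_add_right (hdeg i) N) (hv i hi)
  · rw [coeff_eq_zero_of_degree_lt (hp.trans_le (by exact_mod_cast not_lt.1 hi)), map_zero,
      zero_mul]
    exact zero_mem _

variable (δ : Derivation k K K)

theorem mul_derivation_algebraMap_mem_boundedDegree [Finite σ]
    (hv : ∀ m, v * δ (algebraMap _ K (MvPolynomial.X m : MvPolynomial σ k)) ∈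
      boundedDegree k σ z n N)
    {a : MvPolynomial σ k} (ha : a.totalDegree ≤ M) :
    v * δ (algebraMap _ K a) ∈ boundedDegree k σ z n (M + N) := by
  have := Fintype.ofFinite σ
  rw [derivation_algebraMap_eq_sum, Finset.mul_sum]
  refine sum_mem fun m _ => ?_
  rw [← mul_assoc, mul_comm]
  exact algebraMap_mul_mem_boundedDegree
    (Nat.add_le_add_right ((totalDegree_pderiv_le m a).trans ha) N) (hv m)

theorem derivation_aeval_mul_mem_boundedDegree [Finite σ]
    (hδ : ∀ i < n, δ (z ^ i * v) ∈ boundedDegree k σ z n N)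
    (hX : ∀ i < n, ∀ m, z ^ i * v * δ (algebraMap _ K (MvPolynomial.X m : MvPolynomial σ k)) ∈
      boundedDegree k σ z n N)
    {p : (MvPolynomial σ k)[X]} (hp : p.degree < n) (hdeg : ∀ j, (p.coeff j).totalDegree ≤ M) :
    δ (aeval z p * v) ∈ boundedDegree k σ z n (M + N) := by
  rw [aeval_eq_sum_range, Finset.sum_mul, map_sum]
  refine sum_mem fun i _ => ?_
  rw [Algebra.smul_def, mul_assoc]
  by_cases hi : i < n
  · rw [Derivation.leibniz, smul_eq_mul, smul_eq_mul]
    exact add_mem (algebraMap_mul_mem_boundedDegree (Nat.add_le_add_right (hdeg i) N) (hδ i hi))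
      (mul_derivation_algebraMap_mem_boundedDegree δ (hX i hi) (hdeg i))
  · rw [coeff_eq_zero_of_degree_lt (hp.trans_le (by exact_mod_cast not_lt.1 hi)), map_zero,
      zero_mul, map_zero]
    exact zero_mem _

variable [FaithfulSMul (MvPolynomial σ k) K] {δ} {d : σ → Derivation k K K} {D : MvPolynomial σ k}

theorem mul_lieDerivative_mem_boundedDegree [Fintype σ]
    (hδ : ∀ i < n, algebraMap _ K D * δ (z ^ i * v) ∈ boundedDegree k σ z n N)
    (hX : ∀ i < n, ∀ m, algebraMap _ K D *
      (z ^ i * v * δ (algebraMap _ K (MvPolynomial.X m : MvPolynomial σ k))) ∈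
        boundedDegree k σ z n N)
    (hdX : ∀ i < n, ∀ l m, algebraMap _ K D *
      (z ^ i * v * d l (δ (algebraMap _ K (MvPolynomial.X m : MvPolynomial σ k)))) ∈
        boundedDegree k σ z n N)
    {f : MvPolynomial σ k} (hf : f ≠ 0) {p : σ → (MvPolynomial σ k)[X]}
    (hp : ∀ l, (p l).degree < n) (hdeg : ∀ l j, ((p l).coeff j).totalDegree ≤ M) (l : σ) :
    algebraMap _ K f * (algebraMap _ K f * (algebraMap _ K D * lieDerivative
      (fun m => algebraMap _ K (MvPolynomial.X m : MvPolynomial σ k)) d δ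
      ((algebraMap _ K f)⁻¹ • fun l => aeval z (p l) * v) l)) ∈
        boundedDegree k σ z n (f.totalDegree + (M + N)) := by
  have hf0 : algebraMap _ K f ≠ 0 := (FaithfulSMul.algebraMap_eq_zero_iff _ K).not.2 hf
  set E : Derivation k K K := algebraMap _ K D • δ
  have hE (u : K) : E u = algebraMap _ K D * δ u := rfl
  have hX' : ∀ i < n, ∀ m, z ^ i * v *
      E (algebraMap _ K (MvPolynomial.X m : MvPolynomial σ k)) ∈ boundedDegree k σ z n N :=
    fun i hi m => by simpa only [hE, mul_left_comm] using hX i hi m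
  have hkey (y : σ → K) (c : K) : algebraMap _ K f * (algebraMap _ K f * (c * lieDerivative
      (fun m => algebraMap _ K (MvPolynomial.X m : MvPolynomial σ k)) d δ
      ((algebraMap _ K f)⁻¹ • y) l)) = algebraMap _ K f * (c * δ (y l) + ∑ m, c * (y m *
        d l (δ (algebraMap _ K (MvPolynomial.X m : MvPolynomial σ k))))) -
          y l * (c * δ (algebraMap _ K f)) := by
    rw [mul_left_comm _ c, mul_left_comm _ c, mul_mul_lieDerivative_inv_smul hf0,
      lieDerivative_apply, ← Finset.mul_sum]
    ring
  rw [hkey]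
  refine sub_mem (algebraMap_mul_mem_boundedDegree le_rfl (add_mem ?_ (sum_mem fun m _ => ?_))) ?_
  · exact derivation_aeval_mul_mem_boundedDegree E hδ hX' (hp l) (hdeg l)
  · rw [mul_assoc, mul_left_comm]
    refine aeval_mul_mem_boundedDegree (fun i hi => ?_) (hp m) (hdeg m)
    rw [mul_left_comm, ← mul_assoc (z ^ i)]
    exact hdX i hi l m
  · refine mul_derivation_algebraMap_mem_boundedDegree E (fun m => ?_) le_rfl
    rw [mul_assoc]
    exact aeval_mul_mem_boundedDegree (fun i hi => by simpa only [mul_assoc] using hX' i hi m)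
      (hp l) (hdeg l)

end DegreeBound

section CommonDenominator

variable {A L K : Type*} [CommRing A] [IsDomain A] [Field L] [Field K] [Algebra A L]
  [IsFractionRing A L] [Algebra L K] [Algebra A K] [IsScalarTower A L K] {z : K}

theorem exists_ne_zero_mul_mem_adjoin (hz : Algebra.adjoin L {z} = ⊤) (u : K) :
    ∃ D : A, D ≠ 0 ∧ algebraMap A K D * u ∈ Algebra.adjoin A {z} := by
  have hu : u ∈ Algebra.adjoin L {z} := hz ▸ Algebra.mem_top
  obtain ⟨q, rfl⟩ := Algebra.adjoin_singleton_eq_range_aeval L z ▸ hu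
  have hfrac (x : L) : ∃ a b, algebraMap A L b ≠ 0 ∧ algebraMap A L b * x = algebraMap A L a := by
    obtain ⟨a, b, hb, rfl⟩ := IsFractionRing.div_surjective (A := A) x
    have hb0 : algebraMap A L b ≠ 0 := IsFractionRing.to_map_ne_zero_of_mem_nonZeroDivisors hb
    exact ⟨a, b, hb0, mul_div_cancel₀ _ hb0⟩
  obtain ⟨D, p, hD, hp⟩ := exists_map_eq_C_mul hfrac q
  refine ⟨D, fun h => hD (by rw [h, map_zero]), ?_⟩
  have h : algebraMap A K D * aeval z q = aeval z p := by
    rw [← aeval_map_algebraMap L z p, hp, map_mul, aeval_C, ← IsScalarTower.algebraMap_apply]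
  exact h ▸ aeval_mem_adjoin_singleton A z

theorem exists_ne_zero_forall_mul_mem_adjoin (hz : Algebra.adjoin L {z} = ⊤) (s : Finset K) :
    ∃ D : A, D ≠ 0 ∧ ∀ u ∈ s, algebraMap A K D * u ∈ Algebra.adjoin A {z} := by
  choose D hD hDu using exists_ne_zero_mul_mem_adjoin (A := A) hz
  refine ⟨∏ u ∈ s, D u, Finset.prod_ne_zero_iff.2 fun u _ => hD u, fun u hu => ?_⟩
  obtain ⟨b, hb⟩ := Finset.dvd_prod_of_mem D hu
  rw [hb, map_mul, mul_comm (algebraMap A K (D u)), mul_assoc]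
  exact mul_mem (Subalgebra.algebraMap_mem _ b) (hDu u)

end CommonDenominator

section CommonDegreeBound

variable {k σ K : Type*} [Field k] [Field K] [Algebra k K] [Algebra (MvPolynomial σ k) K]
  [IsScalarTower k (MvPolynomial σ k) K] {z : K}

theorem boundedDegree_mono (z : K) (d : ℕ) : Monotone (boundedDegree k σ z d) :=
  fun M N h u hu => by
    obtain ⟨p, hp, hdeg, rfl⟩ := mem_boundedDegree_iff.1 hu
    exact mem_boundedDegree_iff.2 ⟨p, hp, fun j => (hdeg j).trans h, rfl⟩

theorem mem_adjoin_of_mem_boundedDegree {d N : ℕ} {u : K} (hu : u ∈ boundedDegree k σ z d N) :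
    u ∈ Algebra.adjoin (MvPolynomial σ k) {z} := by
  obtain ⟨p, -, -, rfl⟩ := mem_boundedDegree_iff.1 hu
  exact aeval_mem_adjoin_singleton _ z

theorem exists_mem_boundedDegree (hz : IsIntegral (MvPolynomial σ k) z) {u : K}
    (hu : u ∈ Algebra.adjoin (MvPolynomial σ k) {z}) :
    ∃ N, u ∈ boundedDegree k σ z (minpoly (MvPolynomial σ k) z).natDegree N := by
  obtain ⟨p, hp, rfl⟩ := exists_degree_lt_aeval_eq hz hu
  refine ⟨p.support.sup fun j => (p.coeff j).totalDegree,
    mem_boundedDegree_iff.2 ⟨p, hp, fun j => ?_, rfl⟩⟩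
  by_cases hj : p.coeff j = 0
  · rw [hj, MvPolynomial.totalDegree_zero]
    exact zero_le
  · exact Finset.le_sup (f := fun j => (p.coeff j).totalDegree) (mem_support_iff.2 hj)

theorem exists_forall_mem_boundedDegree (hz : IsIntegral (MvPolynomial σ k) z) (s : Finset K)
    (hs : ∀ u ∈ s, u ∈ Algebra.adjoin (MvPolynomial σ k) {z}) :
    ∃ N, ∀ u ∈ s, u ∈ boundedDegree k σ z (minpoly (MvPolynomial σ k) z).natDegree N := by
  refine ((Filter.eventually_all_finset s).2 fun u hu => ?_).exists (f := Filter.atTop)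
  obtain ⟨N, hN⟩ := exists_mem_boundedDegree hz (hs u hu)
  exact Filter.eventually_atTop.2 ⟨N, fun M hM => boundedDegree_mono z _ hM hN⟩

theorem exists_ne_zero_forall_mul_mem_boundedDegree {L : Type*} [Field L]
    [Algebra (MvPolynomial σ k) L] [IsFractionRing (MvPolynomial σ k) L] [Algebra L K]
    [IsScalarTower (MvPolynomial σ k) L K] (hz : IsIntegral (MvPolynomial σ k) z)
    (htop : Algebra.adjoin L {z} = ⊤) {s : Set K} (hs : s.Finite) :
    ∃ D : MvPolynomial σ k, D ≠ 0 ∧ ∃ N, ∀ u ∈ s, algebraMap _ K D * u ∈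
      boundedDegree k σ z (minpoly (MvPolynomial σ k) z).natDegree N := by
  classical
  obtain ⟨D, hD, hDs⟩ :=
    exists_ne_zero_forall_mul_mem_adjoin (A := MvPolynomial σ k) htop hs.toFinset
  obtain ⟨N, hN⟩ := exists_forall_mem_boundedDegree hz
    (hs.toFinset.image fun u => algebraMap _ K D * u) (Finset.forall_mem_image.2 hDs)
  exact ⟨D, hD, N, fun u hu => hN _ (Finset.mem_image_of_mem _ (hs.mem_toFinset.2 hu))⟩

end CommonDegreeBound

section CommonDenominatorOfForms

variable {k J R K : Type*} [Field k] {n : ℕ} [CommRing R] [Field K] [Algebra k K]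
  [Algebra (MvPolynomial (Fin n) k) K] [Algebra R K] [IsScalarTower k (MvPolynomial (Fin n) k) K]

variable (R) in
/-- `D` is a common denominator over `A = k[x₁, …, xₙ]` for the differential calculus of `R ⊆ K`
with respect to the element `z` of `K` and the basis `zⁱ v` (`i < deg z`) of the coefficient space
of one-forms: the products by `D` of the elements of `R`, of `v` and of the partial derivatives of
`z` are polynomials in `z`, and so are, with coefficients of degree at most `N`, the products by `D`
of all terms of the Lie derivatives of the basic one-forms `zⁱ v dxₘ`. -/
structure IsCommonDenominator (d : Fin n → Derivation k K K) (δ : J → Derivation k K K) (z v : K)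
    (D : MvPolynomial (Fin n) k) (N : ℕ) : Prop where
  ne_zero : D ≠ 0
  algebraMap_mem (x : R) :
    algebraMap _ K D * algebraMap R K x ∈ Algebra.adjoin (MvPolynomial (Fin n) k) {z}
  basis_mem : algebraMap _ K D * v ∈ Algebra.adjoin (MvPolynomial (Fin n) k) {z}
  partial_mem (l : Fin n) : algebraMap _ K D * d l z ∈ Algebra.adjoin (MvPolynomial (Fin n) k) {z}
  derivation_mem (j : J) : ∀ i < (minpoly (MvPolynomial (Fin n) k) z).natDegree,
    algebraMap _ K D * δ j (z ^ i * v) ∈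
      boundedDegree k (Fin n) z (minpoly (MvPolynomial (Fin n) k) z).natDegree N
  coordinate_mem (j : J) : ∀ i < (minpoly (MvPolynomial (Fin n) k) z).natDegree, ∀ m,
    algebraMap _ K D *
      (z ^ i * v * δ j (algebraMap _ K (MvPolynomial.X m : MvPolynomial (Fin n) k))) ∈
        boundedDegree k (Fin n) z (minpoly (MvPolynomial (Fin n) k) z).natDegree N
  partial_coordinate_mem (j : J) : ∀ i < (minpoly (MvPolynomial (Fin n) k) z).natDegree, ∀ l m,
    algebraMap _ K D *
      (z ^ i * v * d l (δ j (algebraMap _ K (MvPolynomial.X m : MvPolynomial (Fin n) k)))) ∈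
        boundedDegree k (Fin n) z (minpoly (MvPolynomial (Fin n) k) z).natDegree N

theorem mul_algebraMap_mem_of_span_eq_top {A B : Type*} [CommRing A] [CommRing B] [Algebra A R]
    [Algebra A B] [Algebra R B] [IsScalarTower A R B] {S : Subalgebra A B} {D : B} {s : Set R}
    (hs : Submodule.span A s = ⊤) (hD : ∀ x ∈ s, D * algebraMap R B x ∈ S) (x : R) :
    D * algebraMap R B x ∈ S := by
  have hle : Submodule.span A s ≤ (Subalgebra.toSubmodule S).comap
      (LinearMap.mulLeft A D ∘ₗ (IsScalarTower.toAlgHom A R B).toLinearMap) :=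
    Submodule.span_le.2 hD
  exact hle (hs ▸ Submodule.mem_top)

theorem exists_isCommonDenominator [Finite J] [Algebra (MvPolynomial (Fin n) k) R]
    [Module.Finite (MvPolynomial (Fin n) k) R] [IsScalarTower (MvPolynomial (Fin n) k) R K]
    {L : Type*} [Field L] [Algebra (MvPolynomial (Fin n) k) L]
    [IsFractionRing (MvPolynomial (Fin n) k) L] [Algebra L K]
    [IsScalarTower (MvPolynomial (Fin n) k) L K] (d : Fin n → Derivation k K K)
    (δ : J → Derivation k K K) {z : K} (hz : IsIntegral (MvPolynomial (Fin n) k) z)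
    (htop : Algebra.adjoin L {z} = ⊤) (v : K) :
    ∃ D N, IsCommonDenominator R d δ z v D N := by
  obtain ⟨s, hs⟩ := Module.Finite.fg_top (R := MvPolynomial (Fin n) k) (M := R)
  let r := (minpoly (MvPolynomial (Fin n) k) z).natDegree
  let x (m : Fin n) : K := algebraMap _ K (MvPolynomial.X m : MvPolynomial (Fin n) k)
  obtain ⟨D, hD, N, h⟩ := exists_ne_zero_forall_mul_mem_boundedDegree (k := k) (L := L) hz htop
    (Set.toFinite (algebraMap R K '' s ∪ {v} ∪ Set.range (fun l => d l z) ∪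
      Set.range (fun q : J × Fin r => δ q.1 (z ^ (q.2 : ℕ) * v)) ∪
      Set.range (fun q : J × Fin r × Fin n => z ^ (q.2.1 : ℕ) * v * δ q.1 (x q.2.2)) ∪
      Set.range (fun q : J × Fin r × Fin n × Fin n =>
        z ^ (q.2.1 : ℕ) * v * d q.2.2.1 (δ q.1 (x q.2.2.2)))))
  simp only [Set.mem_union, or_imp, forall_and, Set.forall_mem_range, Set.forall_mem_image,
    Set.mem_singleton_iff, forall_eq, Prod.forall, Fin.forall_iff (n := r), SetLike.mem_coe] at h
  obtain ⟨⟨⟨⟨⟨hR, hv⟩, hdz⟩, hδ⟩, hX⟩, hdX⟩ := h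
  exact ⟨D, N, hD,
    mul_algebraMap_mem_of_span_eq_top hs fun y hy => mem_adjoin_of_mem_boundedDegree (hR hy),
    mem_adjoin_of_mem_boundedDegree hv, fun l => mem_adjoin_of_mem_boundedDegree (hdz l),
    hδ, hX, hdX⟩

end CommonDenominatorOfForms

section ResidueFields

variable {A κ : Type*} [CommRing A] [Field κ] [Algebra A κ]

theorem closure_range_algebraMap_eq_top
    (hfrac : ∀ x : κ, ∃ a b, algebraMap A κ b ≠ 0 ∧ algebraMap A κ b * x = algebraMap A κ a) :
    Subfield.closure (Set.range (algebraMap A κ)) = ⊤ := by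
  refine eq_top_iff.2 fun x _ => ?_
  obtain ⟨a, b, hb, hx⟩ := hfrac x
  rw [← mul_div_cancel_left₀ x hb, hx]
  exact div_mem (Subfield.subset_closure ⟨a, rfl⟩) (Subfield.subset_closure ⟨b, rfl⟩)

theorem exists_mul_algebraMap_residueField_eq (P : Ideal A) [P.IsPrime] (x : P.ResidueField) :
    ∃ a b, algebraMap A P.ResidueField b ≠ 0 ∧
      algebraMap A P.ResidueField b * x = algebraMap A P.ResidueField a := by
  obtain ⟨a, b, hb, rfl⟩ := IsFractionRing.div_surjective (A := A ⧸ P) x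
  obtain ⟨a, rfl⟩ := Ideal.Quotient.mk_surjective a
  obtain ⟨b, rfl⟩ := Ideal.Quotient.mk_surjective b
  have hb0 : algebraMap (A ⧸ P) P.ResidueField (Ideal.Quotient.mk P b) ≠ 0 :=
    IsFractionRing.to_map_ne_zero_of_mem_nonZeroDivisors hb
  exact ⟨a, b, hb0, mul_div_cancel₀ _ hb0⟩

variable {R E : Type*} [CommRing R] [Field E] [Algebra A R] [Algebra κ E] [Algebra A E]
  [Algebra R E] [IsScalarTower A κ E] [IsScalarTower A R E] {z : R}

theorem adjoin_algebraMap_eq_top (hz : IsIntegral A z)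
    (hfrac : ∀ x : E, ∃ a b, algebraMap R E b ≠ 0 ∧ algebraMap R E b * x = algebraMap R E a)
    {D : A} (hD : algebraMap A κ D ≠ 0)
    (hDR : ∀ x : R, algebraMap A R D * x ∈ Algebra.adjoin A {z}) :
    Algebra.adjoin κ {algebraMap R E z} = ⊤ := by
  have hzκ : IsIntegral κ (algebraMap R E z) := (hz.algebraMap (B := E)).tower_top
  have hD0 : algebraMap κ E (algebraMap A κ D) ≠ 0 := (_root_.map_ne_zero _).2 hD
  have hmem (x : R) : algebraMap R E x ∈ IntermediateField.adjoin κ {algebraMap R E z} := by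
    obtain ⟨q, hq⟩ := Algebra.adjoin_singleton_eq_range_aeval A z ▸ hDR x
    have hx : algebraMap κ E (algebraMap A κ D) * algebraMap R E x =
        aeval (algebraMap R E z) (q.map (algebraMap A κ)) := by
      rw [aeval_map_algebraMap, aeval_algebraMap_apply, ← IsScalarTower.algebraMap_apply,
        IsScalarTower.algebraMap_apply A R E, ← map_mul]
      exact congrArg _ hq.symm
    rw [← mul_div_cancel_left₀ (algebraMap R E x) hD0, hx]
    exact div_mem (IntermediateField.algebra_adjoin_le_adjoin κ _
      (aeval_mem_adjoin_singleton κ _)) (IntermediateField.algebraMap_mem _ _)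
  refine Algebra.adjoin_eq_top_of_primitive_element hzκ.isAlgebraic (eq_top_iff.2 fun x _ => ?_)
  obtain ⟨a, b, hb, hx⟩ := hfrac x
  rw [← mul_div_cancel_left₀ x hb, hx]
  exact div_mem (hmem a) (hmem b)

end ResidueFields

section FormsAlongPrime

variable {k J R K : Type*} [Field k] {n : ℕ} [CommRing R] [Field K] [Algebra k K]
  [Algebra (MvPolynomial (Fin n) k) K] [Algebra R K] [IsScalarTower k (MvPolynomial (Fin n) k) K]
  {d : Fin n → Derivation k K K} {δ : J → Derivation k K K} {v : K}
  {D : MvPolynomial (Fin n) k} {N : ℕ} {f : MvPolynomial (Fin n) k}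

namespace IsCommonDenominator

theorem algebraMap_mem_localizedSubalgebra {z : K} (h : IsCommonDenominator R d δ z v D N)
    (hf : Prime f) (hfD : ¬f ∣ D) (x : R) :
    algebraMap R K x ∈ localizedSubalgebra hf (Algebra.adjoin _ {z}) :=
  ⟨D, hfD, h.algebraMap_mem x⟩

theorem partial_mem_localizedSubalgebra {z : K} (h : IsCommonDenominator R d δ z v D N)
    (hd : ∀ l p, d l (algebraMap (MvPolynomial (Fin n) k) K p) =
      algebraMap _ K (MvPolynomial.pderiv l p))
    (hf : Prime f) (hfD : ¬f ∣ D) (l : Fin n) {u : K}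
    (hu : u ∈ localizedSubalgebra hf (Algebra.adjoin _ {z})) :
    d l u ∈ localizedSubalgebra hf (Algebra.adjoin _ {z}) :=
  derivation_mem_localizedSubalgebra hf (d l) (fun _ =>
    derivation_mem_of_mem_adjoin (d l) (fun p => hd l p ▸ Subalgebra.algebraMap_mem _ _)
      (le_localizedSubalgebra hf (Algebra.self_mem_adjoin_singleton _ z))
      ⟨D, hfD, h.partial_mem l⟩) hu

variable [Algebra (MvPolynomial (Fin n) k) R]
  [IsScalarTower (MvPolynomial (Fin n) k) R K]

theorem exists_aeval_eq_mul [FaithfulSMul R K] {z : R}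
    (h : IsCommonDenominator R d δ (algebraMap R K z) v D N) (x : R) :
    ∃ q : (MvPolynomial (Fin n) k)[X], aeval z q = algebraMap _ R D * x := by
  obtain ⟨q, hq⟩ := Algebra.adjoin_singleton_eq_range_aeval (MvPolynomial (Fin n) k)
    (algebraMap R K z) ▸ h.algebraMap_mem x
  refine ⟨q, FaithfulSMul.algebraMap_injective R K ?_⟩
  rw [map_mul, ← IsScalarTower.algebraMap_apply, ← aeval_algebraMap_apply]
  exact hq

variable [Algebra k R]

theorem derivation_mem_localizedSubalgebra {z : R}
    (h : IsCommonDenominator R d δ (algebraMap R K z) v D N) {j : J} {δR : Derivation k R R}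
    (hδ : ∀ x, δ j (algebraMap R K x) = algebraMap R K (δR x)) (hf : Prime f) (hfD : ¬f ∣ D) {u : K}
    (hu : u ∈ localizedSubalgebra hf (Algebra.adjoin _ {algebraMap R K z})) :
    δ j u ∈ localizedSubalgebra hf (Algebra.adjoin _ {algebraMap R K z}) := by
  refine DifferentialPrime.derivation_mem_localizedSubalgebra hf (δ j) (fun _ =>
    derivation_mem_of_mem_adjoin (δ j) (fun p => ?_)
      (h.algebraMap_mem_localizedSubalgebra hf hfD z) ?_) hu
  · rw [IsScalarTower.algebraMap_apply (MvPolynomial (Fin n) k) R K, hδ]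
    exact h.algebraMap_mem_localizedSubalgebra hf hfD _
  · rw [hδ]
    exact h.algebraMap_mem_localizedSubalgebra hf hfD _

variable {κ E : Type*} [Field κ] [Field E] [Algebra (MvPolynomial (Fin n) k) κ] [Algebra κ E]
  [Algebra (MvPolynomial (Fin n) k) E] [Algebra R E] [IsScalarTower (MvPolynomial (Fin n) k) κ E]
  [IsScalarTower (MvPolynomial (Fin n) k) R E]

theorem lieDerivative_mem_localizedSubalgebra [FaithfulSMul (MvPolynomial (Fin n) k) K]
    [FaithfulSMul R K] [Algebra.FormallyUnramified (MvPolynomial (Fin n) k) K] {z : R}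
    (h : IsCommonDenominator R d δ (algebraMap R K z) v D N)
    (hz : IsIntegral (MvPolynomial (Fin n) k) z)
    (hd : ∀ l p, d l (algebraMap (MvPolynomial (Fin n) k) K p) =
      algebraMap _ K (MvPolynomial.pderiv l p))
    {j : J} {δR : Derivation k R R} (hδ : ∀ x, δ j (algebraMap R K x) = algebraMap R K (δR x))
    (hv : v * aeval (algebraMap R K z) (derivative (minpoly (MvPolynomial (Fin n) k) z)) = 1)
    (hf : Prime f) (hfD : ¬f ∣ D)
    (hker : ∀ p, algebraMap (MvPolynomial (Fin n) k) κ p = 0 ↔ f ∣ p)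
    (hfrac : ∀ x : κ, ∃ a b, algebraMap (MvPolynomial (Fin n) k) κ b ≠ 0 ∧
      algebraMap (MvPolynomial (Fin n) k) κ b * x = algebraMap (MvPolynomial (Fin n) k) κ a)
    (hδf : algebraMap R E (δR (algebraMap _ R f)) = 0) {g : κ[X]}
    (hg : (minpoly (MvPolynomial (Fin n) k) z).map (algebraMap _ κ) =
      minpoly κ (algebraMap R E z) * g)
    {p : Fin n → (MvPolynomial (Fin n) k)[X]}
    (hp : ∀ l, (p l).map (algebraMap _ κ) = C (algebraMap _ κ (MvPolynomial.pderiv l f)) *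
      (derivative (minpoly κ (algebraMap R E z)) * g)) (l : Fin n) :
    lieDerivative (fun m => algebraMap _ K (MvPolynomial.X m : MvPolynomial (Fin n) k)) d (δ j)
      ((algebraMap _ K f)⁻¹ • fun l => aeval (algebraMap R K z) (p l) * v) l ∈
        localizedSubalgebra hf (Algebra.adjoin _ {algebraMap R K z}) := by
  obtain ⟨q, hq⟩ := h.exists_aeval_eq_mul (δR (algebraMap _ R f))
  refine lieDerivative_mem_of_map_eq (h.algebraMap_mem_localizedSubalgebra hf hfD z)
    (fun _ _ hb => mem_localizedSubalgebra_of_mul_mem hf hb) hf.ne_zero hker hfrac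
    (minpoly.monic hz) (by rw [aeval_algebraMap_apply, minpoly.aeval, map_zero])
    ⟨D, hfD, h.basis_mem⟩ hv (fun _ => Subalgebra.algebraMap_mem _ _)
    (fun l _ => h.partial_mem_localizedSubalgebra hd hf hfD l)
    (fun _ => h.derivation_mem_localizedSubalgebra hδ hf hfD) (derivation_comm_of_pderiv hd)
    (derivation_eq_sum_mul_of_pderiv hd (δ j)) hg (fun l => hd l f) hp hfD (q := q) ?_
    (minpoly.dvd _ _ ?_) l
  · rw [aeval_algebraMap_apply, hq, map_mul, ← hδ, ← IsScalarTower.algebraMap_apply,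
      ← IsScalarTower.algebraMap_apply]
  · rw [aeval_map_algebraMap, aeval_algebraMap_apply, hq, map_mul, hδf, mul_zero]

end IsCommonDenominator

end FormsAlongPrime

section Poles

variable {k K : Type*} [Field k] {n : ℕ} [Field K] [Algebra (MvPolynomial (Fin n) k) K]
  {f : MvPolynomial (Fin n) k} {v : K}

theorem exists_inv_mul_notMem_localizedSubalgebra [CharZero k] {κ : Type*} [Field κ] [CharZero κ]
    [Algebra (MvPolynomial (Fin n) k) κ] [FaithfulSMul (MvPolynomial (Fin n) k) K] {z : K}
    (hz : IsIntegral (MvPolynomial (Fin n) k) z) (hf : Prime f)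
    (hker : ∀ p, algebraMap (MvPolynomial (Fin n) k) κ p = 0 ↔ f ∣ p)
    (hv : v * aeval z (derivative (minpoly (MvPolynomial (Fin n) k) z)) = 1) {g : κ[X]} (hg : g ≠ 0)
    {p : Fin n → (MvPolynomial (Fin n) k)[X]}
    (hdeg : ∀ l, (p l).degree < (minpoly (MvPolynomial (Fin n) k) z).natDegree)
    (hp : ∀ l, (p l).map (algebraMap _ κ) = C (algebraMap _ κ (MvPolynomial.pderiv l f)) * g) :
    ∃ l, (algebraMap _ K f)⁻¹ * (aeval z (p l) * v) ∉
      localizedSubalgebra hf (Algebra.adjoin _ {z}) := by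
  obtain ⟨l, hl⟩ := exists_pderiv_ne_zero hf.irreducible
  have hf0 : algebraMap _ K f ≠ 0 := (FaithfulSMul.algebraMap_eq_zero_iff _ K).not.2 hf.ne_zero
  refine ⟨l, fun hmem => ?_⟩
  have hdvd := dvd_coeff_of_mem_localizedSubalgebra hf hz (hdeg l) (mul_mem
    (le_localizedSubalgebra hf (aeval_mem_adjoin_singleton _ z)) hmem)
    (h := by
      rw [mul_left_comm, mul_inv_cancel_left₀ hf0, mul_left_comm, mul_comm _ v, hv, mul_one])
  have hzero : (p l).map (algebraMap _ κ) = 0 := ext fun i => by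
    rw [coeff_map, coeff_zero, hker]
    exact hdvd i
  refine mul_ne_zero (C_ne_zero.2 ?_) hg ((hp l).symm.trans hzero)
  exact (hker _).not.2 (not_dvd_pderiv hl)

end Poles

section DifferentialPrimeForms

variable {k J R K : Type*} [Field k] {n : ℕ} [CommRing R] [Field K] [Algebra k K] [Algebra k R]
  [Algebra (MvPolynomial (Fin n) k) R] [Algebra (MvPolynomial (Fin n) k) K] [Algebra R K]
  [IsScalarTower k (MvPolynomial (Fin n) k) K] [IsScalarTower (MvPolynomial (Fin n) k) R K]
  [FaithfulSMul (MvPolynomial (Fin n) k) K] [FaithfulSMul R K]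
  [Algebra.FormallyUnramified (MvPolynomial (Fin n) k) K]
  {d : Fin n → Derivation k K K} {δ : J → Derivation k K K} {v : K} {z : R}
  {D : MvPolynomial (Fin n) k} {N e : ℕ} {f : MvPolynomial (Fin n) k}

/-- The one-form `∑ x l dX_l` over `K` has a simple pole along `f = 0` and no other pole up to the
common denominator `D`, while its Lie derivatives along the `δ j` are, up to `D`, polynomials in `z`
with coefficients of degree at most `N`. Having no pole along `f = 0` is encoded as membership in
the localization of `A[z]` at the complement of `(f)`. -/
structure IsSimplePoleForm (d : Fin n → Derivation k K K) (δ : J → Derivation k K K) (z : K)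
    (D : MvPolynomial (Fin n) k) (N : ℕ) {f : MvPolynomial (Fin n) k} (hf : Prime f)
    (x : Fin n → K) : Prop where
  exists_notMem : ∃ l, x l ∉ localizedSubalgebra hf (Algebra.adjoin _ {z})
  mul_mem (l : Fin n) : algebraMap _ K D * (algebraMap _ K f * x l) ∈
    Algebra.adjoin (MvPolynomial (Fin n) k) {z}
  mul_lieDerivative_mem (j : J) (l : Fin n) : algebraMap _ K D * lieDerivative
    (fun m => algebraMap _ K (MvPolynomial.X m : MvPolynomial (Fin n) k)) d (δ j) x l ∈
      boundedDegree k (Fin n) z (minpoly (MvPolynomial (Fin n) k) z).natDegree N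

namespace IsCommonDenominator

variable {κ E : Type*} [Field κ] [Field E] [Algebra (MvPolynomial (Fin n) k) κ] [Algebra κ E]
  [Algebra (MvPolynomial (Fin n) k) E] [Algebra R E] [IsScalarTower (MvPolynomial (Fin n) k) κ E]
  [IsScalarTower (MvPolynomial (Fin n) k) R E]

theorem mul_lieDerivative_mem_boundedDegree
    (h : IsCommonDenominator R d δ (algebraMap R K z) v D N)
    (hz : IsIntegral (MvPolynomial (Fin n) k) z)
    (hd : ∀ l p, d l (algebraMap (MvPolynomial (Fin n) k) K p) =
      algebraMap _ K (MvPolynomial.pderiv l p))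
    {j : J} {δR : Derivation k R R} (hδ : ∀ x, δ j (algebraMap R K x) = algebraMap R K (δR x))
    (hv : v * aeval (algebraMap R K z) (derivative (minpoly (MvPolynomial (Fin n) k) z)) = 1)
    (hf : Prime f) (hfD : ¬f ∣ D)
    (hker : ∀ p, algebraMap (MvPolynomial (Fin n) k) κ p = 0 ↔ f ∣ p)
    (hfrac : ∀ x : κ, ∃ a b, algebraMap (MvPolynomial (Fin n) k) κ b ≠ 0 ∧
      algebraMap (MvPolynomial (Fin n) k) κ b * x = algebraMap (MvPolynomial (Fin n) k) κ a)
    (hδf : algebraMap R E (δR (algebraMap _ R f)) = 0) {g : κ[X]}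
    (hg : (minpoly (MvPolynomial (Fin n) k) z).map (algebraMap _ κ) =
      minpoly κ (algebraMap R E z) * g)
    {p : Fin n → (MvPolynomial (Fin n) k)[X]}
    (hdeg : ∀ l, (p l).degree < (minpoly (MvPolynomial (Fin n) k) z).natDegree)
    (hcoeff : ∀ l i, ((p l).coeff i).totalDegree ≤ f.totalDegree + e)
    (hp : ∀ l, (p l).map (algebraMap _ κ) = C (algebraMap _ κ (MvPolynomial.pderiv l f)) *
      (derivative (minpoly κ (algebraMap R E z)) * g)) (l : Fin n) :
    algebraMap _ K D * lieDerivative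
      (fun m => algebraMap _ K (MvPolynomial.X m : MvPolynomial (Fin n) k)) d (δ j)
      ((algebraMap _ K f)⁻¹ • fun l => aeval (algebraMap R K z) (p l) * v) l ∈
        boundedDegree k (Fin n) (algebraMap R K z)
          (minpoly (MvPolynomial (Fin n) k) (algebraMap R K z)).natDegree (e + N) := by
  have hmin : minpoly (MvPolynomial (Fin n) k) (algebraMap R K z) = minpoly _ z :=
    minpoly.algebraMap_eq (FaithfulSMul.algebraMap_injective R K) z
  have hbound := DifferentialPrime.mul_lieDerivative_mem_boundedDegree (h.derivation_mem j)
    (h.coordinate_mem j) (h.partial_coordinate_mem j) hf.ne_zero (hmin ▸ hdeg) hcoeff l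
  have hregular := mul_mem (Subalgebra.algebraMap_mem _ D)
    (h.lieDerivative_mem_localizedSubalgebra hz hd hδ hv hf hfD hker hfrac hδf hg hp l)
  rw [add_assoc f.totalDegree] at hbound
  have hzK := hz.algebraMap (B := K)
  exact mem_boundedDegree_of_algebraMap_mul_mem hzK hf hregular
    (mem_boundedDegree_of_algebraMap_mul_mem hzK hf
      (mul_mem (Subalgebra.algebraMap_mem _ f) hregular) hbound)

theorem exists_isSimplePoleForm_of_residueField [CharZero k] [FiniteDimensional κ E]
    (h : IsCommonDenominator R d δ (algebraMap R K z) v D N)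
    (hz : IsIntegral (MvPolynomial (Fin n) k) z)
    (hd : ∀ l p, d l (algebraMap (MvPolynomial (Fin n) k) K p) =
      algebraMap _ K (MvPolynomial.pderiv l p))
    {δR : J → Derivation k R R} (hδ : ∀ j x, δ j (algebraMap R K x) = algebraMap R K (δR j x))
    (hv : v * aeval (algebraMap R K z) (derivative (minpoly (MvPolynomial (Fin n) k) z)) = 1)
    (he : ∀ i, ∃ q : (MvPolynomial (Fin n) k)[X], q.Monic ∧ (∀ i, (q.coeff i).totalDegree ≤ e) ∧
      aeval ((minpolyDiv (MvPolynomial (Fin n) k) z).coeff i) q = 0) (hf : Prime f) (hfD : ¬f ∣ D)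
    (hker : ∀ p, algebraMap (MvPolynomial (Fin n) k) κ p = 0 ↔ f ∣ p)
    (hfrac : ∀ x : κ, ∃ a b, algebraMap (MvPolynomial (Fin n) k) κ b ≠ 0 ∧
      algebraMap (MvPolynomial (Fin n) k) κ b * x = algebraMap (MvPolynomial (Fin n) k) κ a)
    (hztop : Algebra.adjoin κ {algebraMap R E z} = ⊤)
    (hδf : ∀ j, algebraMap R E (δR j (algebraMap _ R f)) = 0) :
    ∃ x, IsSimplePoleForm d δ (algebraMap R K z) D (e + N) hf x := by
  have hf0 : algebraMap _ K f ≠ 0 := (FaithfulSMul.algebraMap_eq_zero_iff _ K).not.2 hf.ne_zero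
  have hmin : minpoly (MvPolynomial (Fin n) k) (algebraMap R K z) = minpoly _ z :=
    minpoly.algebraMap_eq (FaithfulSMul.algebraMap_injective R K) z
  have hzκ : IsIntegral κ (algebraMap R E z) := (hz.algebraMap (B := E)).tower_top
  have : CharZero κ := charZero_of_injective_ringHom
    (f := (algebraMap (MvPolynomial (Fin n) k) κ).comp MvPolynomial.C) (RingHom.injective _)
  obtain ⟨g, hg⟩ : minpoly κ (algebraMap R E z) ∣
      (minpoly (MvPolynomial (Fin n) k) z).map (algebraMap _ κ) :=
    minpoly.dvd _ _ (by rw [aeval_map_algebraMap, aeval_algebraMap_apply, minpoly.aeval, map_zero])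
  have hg0 : g ≠ 0 := right_ne_zero_of_mul (hg ▸ ((minpoly.monic hz).map _).ne_zero)
  choose p hdeg hcoeff hp using
    exists_map_eq_C_pderiv_mul hker (closure_range_algebraMap_eq_top hfrac) hz hztop hg he
  refine ⟨(algebraMap _ K f)⁻¹ • fun l => aeval (algebraMap R K z) (p l) * v, ?_, fun l => ?_,
    fun j => h.mul_lieDerivative_mem_boundedDegree hz hd (hδ j) hv hf hfD hker hfrac (hδf j) hg
      hdeg hcoeff hp⟩
  · exact exists_inv_mul_notMem_localizedSubalgebra (hz.algebraMap (B := K)) hf hker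
      (hmin ▸ hv) (mul_ne_zero (derivative_ne_zero.2 (minpoly.natDegree_pos hzκ).ne') hg0)
      (hmin ▸ hdeg) hp
  · rw [Pi.smul_apply, smul_eq_mul, mul_inv_cancel_left₀ hf0, mul_left_comm]
    exact mul_mem (aeval_mem_adjoin_singleton _ _) h.basis_mem

theorem exists_isSimplePoleForm [CharZero k]
    (h : IsCommonDenominator R d δ (algebraMap R K z) v D N)
    (hz : IsIntegral (MvPolynomial (Fin n) k) z)
    (hd : ∀ l p, d l (algebraMap (MvPolynomial (Fin n) k) K p) =
      algebraMap _ K (MvPolynomial.pderiv l p))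
    {δR : J → Derivation k R R} (hδ : ∀ j x, δ j (algebraMap R K x) = algebraMap R K (δR j x))
    (hv : v * aeval (algebraMap R K z) (derivative (minpoly (MvPolynomial (Fin n) k) z)) = 1)
    (he : ∀ i, ∃ q : (MvPolynomial (Fin n) k)[X], q.Monic ∧ (∀ i, (q.coeff i).totalDegree ≤ e) ∧
      aeval ((minpolyDiv (MvPolynomial (Fin n) k) z).coeff i) q = 0)
    {P : Ideal R} [P.IsPrime] (hP : ∀ j, ∀ x ∈ P, δR j x ∈ P) (hf : Prime f)
    (hfP : P.under (MvPolynomial (Fin n) k) = Ideal.span {f}) (hDP : algebraMap _ R D ∉ P) :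
    ∃ x, IsSimplePoleForm d δ (algebraMap R K z) D (e + N) hf x := by
  let κ := (P.under (MvPolynomial (Fin n) k)).ResidueField
  let E := P.ResidueField
  let : Algebra κ E := (Ideal.ResidueField.map _ P (algebraMap _ R) rfl).toAlgebra
  have : IsScalarTower (MvPolynomial (Fin n) k) κ E := .of_algebraMap_eq fun p =>
    (Ideal.ResidueField.map_algebraMap _ P (algebraMap _ R) rfl p).symm
  have hker (p : MvPolynomial (Fin n) k) : algebraMap _ κ p = 0 ↔ f ∣ p := by
    rw [Ideal.algebraMap_residueField_eq_zero, hfP, Ideal.mem_span_singleton]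
  have hfP' : algebraMap _ R f ∈ P :=
    Ideal.mem_comap.1 (hfP.ge (Ideal.mem_span_singleton_self f))
  have hfD : ¬f ∣ D := fun hdvd => hDP (P.mem_of_dvd (map_dvd _ hdvd) hfP')
  have hztop : Algebra.adjoin κ {algebraMap R E z} = ⊤ :=
    adjoin_algebraMap_eq_top hz (exists_mul_algebraMap_residueField_eq P) ((hker D).not.2 hfD)
      fun x => Algebra.adjoin_singleton_eq_range_aeval (MvPolynomial (Fin n) k) z ▸
        h.exists_aeval_eq_mul x
  have : FiniteDimensional κ E := Module.finite_def.2 (by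
    rw [← Algebra.top_toSubmodule, ← hztop]
    exact (hz.algebraMap (B := E)).tower_top.fg_adjoin_singleton)
  exact h.exists_isSimplePoleForm_of_residueField hz hd hδ hv he hf hfD hker
    (exists_mul_algebraMap_residueField_eq _) hztop
    fun j => Ideal.algebraMap_residueField_eq_zero.2 (hP j _ hfP')

end IsCommonDenominator

end DifferentialPrimeForms

section IndependenceOfPoles

theorem linearIndependent_of_mem_of_notMem {k V ι : Type*} [DivisionRing k] [AddCommGroup V]
    [Module k V] {S : ι → Submodule k V} {x : ι → V} (hx : ∀ i, x i ∉ S i)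
    (hxS : ∀ i j, j ≠ i → x j ∈ S i) : LinearIndependent k x := by
  refine linearIndependent_iff_notMem_span.2 fun i hi => hx i (Submodule.span_le.2 ?_ hi)
  rintro _ ⟨j, hj, rfl⟩
  exact hxS i j hj.2

variable {k J K : Type*} [Field k] {n : ℕ} [Field K] [Algebra k K]
  [Algebra (MvPolynomial (Fin n) k) K] [IsScalarTower k (MvPolynomial (Fin n) k) K]
  {d : Fin n → Derivation k K K} {δ : J → Derivation k K K} {z : K} {D : MvPolynomial (Fin n) k}
  {N : ℕ} {ι : Type*} {f : ι → MvPolynomial (Fin n) k} {hf : ∀ i, Prime (f i)} {x : ι → Fin n → K}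

theorem IsSimplePoleForm.linearIndependent
    (hx : ∀ i, IsSimplePoleForm d δ z D N (hf i) (x i)) (hfD : ∀ i, ¬f i ∣ D)
    (hff : ∀ i j, j ≠ i → ¬f i ∣ f j) : LinearIndependent k x := by
  let S (i : ι) : Submodule k K := (Subalgebra.toSubmodule
    (localizedSubalgebra (hf i) (Algebra.adjoin (MvPolynomial (Fin n) k) {z}))).restrictScalars k
  refine linearIndependent_of_mem_of_notMem (S := fun i => Submodule.pi Set.univ fun _ => S i)
    (fun i hi => ?_) fun i j hj l _ => ?_
  · obtain ⟨l, hl⟩ := (hx i).exists_notMem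
    exact hl (hi l trivial)
  · refine ⟨D * f j, fun hdvd => ((hf i).dvd_or_dvd hdvd).elim (hfD i) (hff i j hj), ?_⟩
    rw [map_mul, mul_assoc]
    exact (hx j).mul_mem l

theorem IsSimplePoleForm.finite [Finite J] [FaithfulSMul (MvPolynomial (Fin n) k) K]
    (hconst : ∀ x : K, (∀ j, δ j x = 0) → ∃ c : k, x = algebraMap k K c)
    (hx : ∀ i, IsSimplePoleForm d δ z D N (hf i) (x i)) (hD : D ≠ 0) (hfD : ∀ i, ¬f i ∣ D)
    (hff : ∀ i j, j ≠ i → ¬f i ∣ f j) : Finite ι := by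
  let B := boundedDegree k (Fin n) z (minpoly (MvPolynomial (Fin n) k) z).natDegree N
  let φ : K →ₗ[k] K := LinearMap.mulLeft k (algebraMap _ K D)
  have hφ : Function.Injective φ :=
    mul_right_injective₀ ((FaithfulSMul.algebraMap_eq_zero_iff _ K).not.2 hD)
  have hB : (B.comap φ).FG := Submodule.fg_of_fg_map_injective φ hφ
    ((Module.Finite.iff_fg.1 inferInstance : B.FG).of_le (Submodule.map_comap_le φ B))
  let G : Submodule k (Fin n → K) := Submodule.pi Set.univ fun _ => B.comap φ
  have : FiniteDimensional k G := Module.Finite.iff_fg.2 (Submodule.fg_pi fun _ => hB)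
  let L (j : J) := lieDerivative
    (fun m => algebraMap _ K (MvPolynomial.X m : MvPolynomial (Fin n) k)) d (δ j)
  have : FiniteDimensional k ↥(⨅ j, G.comap (L j)) :=
    finiteDimensional_iInf_comap hconst (fun _ _ _ => lieDerivative_smul _ _) G
  have hmem (i : ι) : x i ∈ ⨅ j, G.comap (L j) :=
    (Submodule.mem_iInf _).2 fun j l _ => (hx i).mul_lieDerivative_mem j l
  exact (LinearIndependent.of_comp (Submodule.subtype _) (v := fun i => ⟨x i, hmem i⟩)
    (linearIndependent hx hfD hff)).finite

end IndependenceOfPoles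

section ExtensionOfDerivations

open scoped TensorProduct

theorem exists_derivation_algebraMap_eq {k S T : Type*} [CommRing k] [CommRing S] [CommRing T]
    [Algebra k S] [Algebra k T] [Algebra S T] [IsScalarTower k S T] [Algebra.FormallyEtale S T]
    (d : Derivation k S S) :
    ∃ D : Derivation k T T, ∀ s, D (algebraMap S T s) = algebraMap S T (d s) := by
  let φ : T ⊗[S] Ω[S⁄k] →ₗ[T] T :=
    ((Algebra.linearMap S T).compDer d).liftKaehlerDifferential.liftBaseChange T
  let ψ := KaehlerDifferential.tensorKaehlerEquivOfFormallyEtale k S T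
  refine ⟨(φ ∘ₗ ψ.symm.toLinearMap).compDer (KaehlerDifferential.D k T), fun s => ?_⟩
  have hs := KaehlerDifferential.tensorKaehlerEquivOfFormallyEtale_symm_D_algebraMap k S T s
  simp [φ, ψ, hs]

theorem formallyEtale_of_isFractionRing {A L K : Type*} [CommRing A] [Field L]
    [CharZero L] [Field K] [Algebra A L] [IsFractionRing A L] [Algebra A K] [Algebra L K]
    [IsScalarTower A L K] [Algebra.IsAlgebraic L K] : Algebra.FormallyEtale A K :=
  have : Algebra.FormallyEtale A L := .of_isLocalization (nonZeroDivisors A)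
  have : Algebra.FormallyEtale L K := .of_isSeparable L K
  .comp A L K

end ExtensionOfDerivations

section HeightOne

variable {R : Type*} [CommRing R]

theorem finite_setOf_height_eq_one_and_mem [IsDomain R] [IsNoetherianRing R] {x : R}
    (hx : x ≠ 0) : {P : PrimeSpectrum R | P.asIdeal.height = 1 ∧ x ∈ P.asIdeal}.Finite := by
  refine Set.Finite.of_finite_image (f := PrimeSpectrum.asIdeal)
    ((Ideal.finite_minimalPrimes_of_isNoetherianRing R (Ideal.span {x})).subset ?_)
    fun _ _ _ _ => PrimeSpectrum.ext
  rintro _ ⟨P, ⟨hP, hxP⟩, rfl⟩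
  refine Ideal.mem_minimalPrimes_of_height_le ((Ideal.span_singleton_le_iff_mem _).2 hxP) ?_
  rw [hP, Order.one_le_iff_ne_zero, Ne, Ideal.height_eq_zero_iff_eq_bot,
    Ideal.span_singleton_eq_bot]
  exact hx

variable {A : Type*} [CommRing A] [IsDomain A] [Algebra A R] [IsDomain R] [FaithfulSMul A R]
  [Algebra.IsIntegral A R]

theorem exists_prime_under_eq_span_singleton [UniqueFactorizationMonoid A] {P : Ideal R}
    [P.IsPrime] (hP : P.height = 1) : ∃ f : A, Prime f ∧ P.under A = Ideal.span {f} := by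
  have hbot : P.under A ≠ ⊥ := fun h => Ideal.ne_bot_of_height_eq_one hP
    (Ideal.eq_bot_of_comap_eq_bot h)
  obtain ⟨f, hfP, hf⟩ := (inferInstance : (P.under A).IsPrime).exists_mem_prime_of_ne_bot hbot
  have hprime : (Ideal.span {f}).IsPrime := (Ideal.span_singleton_prime hf.ne_zero).2 hf
  obtain ⟨Q, hQP, hQ, hover⟩ := Ideal.exists_ideal_le_liesOver_of_le (p := Ideal.span {f})
    (q := P.under A) P ((Ideal.span_singleton_le_iff_mem _).2 hfP)
  have hfQ : Ideal.span {f} = Q.under A := hover.over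
  have hQ0 : Q ≠ ⊥ := by
    rintro rfl
    refine hf.ne_zero (Ideal.span_singleton_eq_bot.1 (hfQ.trans ?_))
    exact Ideal.comap_bot_of_injective _ (FaithfulSMul.algebraMap_injective A R)
  have : P.FiniteHeight := P.finiteHeight_iff.2 (Or.inr (by simp [hP]))
  have : Q.FiniteHeight := Ideal.finiteHeight_of_le hQP Ideal.IsPrime.ne_top'
  have hQP_eq : Q = P := Ideal.eq_of_le_of_height_le Q hQP <| by
    rwa [hP, Order.one_le_iff_ne_zero, Ne, Ideal.height_eq_zero_iff_eq_bot]
  exact ⟨f, hf, (hfQ.trans (by rw [hQP_eq])).symm⟩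

theorem finite_of_finite_image_under [IsNoetherianRing R] {S : Set (PrimeSpectrum R)}
    (hS : ∀ P ∈ S, P.asIdeal.height = 1)
    (hfin : ((fun P => P.asIdeal.under A) '' S).Finite) : S.Finite := by
  refine Set.Finite.of_finite_fibers _ hfin ?_
  rintro _ ⟨P, hPS, rfl⟩
  obtain ⟨f, hfP, hf0⟩ : ∃ f ∈ P.asIdeal.under A, f ≠ 0 := Submodule.exists_mem_ne_zero_of_ne_bot
    fun h => Ideal.ne_bot_of_height_eq_one (hS P hPS) (Ideal.eq_bot_of_comap_eq_bot h)
  refine (finite_setOf_height_eq_one_and_mem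
    ((FaithfulSMul.algebraMap_eq_zero_iff A R).not.2 hf0)).subset fun Q hQ => ⟨hS Q hQ.1, ?_⟩
  exact Ideal.mem_comap.1 ((hQ.2 : Q.asIdeal.under A = P.asIdeal.under A).ge hfP)

end HeightOne

section PrimitiveElement

theorem exists_adjoin_algebraMap_eq_top {A R L K : Type*} [CommRing A] [CommRing R]
    [IsDomain R] [Algebra A R] [Algebra.IsAlgebraic A R] [Field L] [Algebra A L]
    [FaithfulSMul A L] [Field K] [Algebra R K] [IsFractionRing R K] [Algebra L K] [Algebra A K]
    [IsScalarTower A R K] [IsScalarTower A L K] [FiniteDimensional L K]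
    [Algebra.IsSeparable L K] : ∃ z : R, Algebra.adjoin L {algebraMap R K z} = ⊤ := by
  obtain ⟨α, hα⟩ := Field.exists_primitive_element L K
  obtain ⟨x, y, hy, rfl⟩ := IsFractionRing.div_surjective (A := R) α
  have hyK : algebraMap R K y ≠ 0 := IsFractionRing.to_map_ne_zero_of_mem_nonZeroDivisors hy
  obtain ⟨z, c, hc, hcz⟩ := Algebra.IsAlgebraic.exists_smul_eq_mul A x (nonZeroDivisors.ne_zero hy)
  have hcL : algebraMap A L c ≠ 0 := (FaithfulSMul.algebraMap_eq_zero_iff A L).not.2 hc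
  refine ⟨z, eq_top_iff.2 ?_⟩
  rw [← Algebra.adjoin_eq_top_of_primitive_element (IsAlgebraic.of_finite L _) hα]
  refine Algebra.adjoin_le (Set.singleton_subset_iff.2 ?_)
  have hcK : algebraMap A K c * algebraMap R K x = algebraMap R K y * algebraMap R K z := by
    rw [IsScalarTower.algebraMap_apply A R K, ← map_mul, ← Algebra.smul_def, hcz, map_mul]
  have hxy : algebraMap R K x / algebraMap R K y =
      algebraMap L K (algebraMap A L c)⁻¹ * algebraMap R K z := by
    rw [map_inv₀, ← IsScalarTower.algebraMap_apply, eq_inv_mul_iff_mul_eq₀, mul_div_assoc', hcK,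
      mul_div_cancel_left₀ _ hyK]
    rwa [IsScalarTower.algebraMap_apply A L K, _root_.map_ne_zero]
  rw [SetLike.mem_coe, hxy]
  exact mul_mem (Subalgebra.algebraMap_mem _ _) (Algebra.subset_adjoin rfl)

end PrimitiveElement

section Constants

theorem exists_eq_algebraMap_of_forall_derivation_eq_zero {k J R K : Type*} [CommRing k]
    [CommRing R] [Field K] [Algebra k R] [Algebra k K] [Algebra R K] [IsScalarTower k R K]
    [IsFractionRing R K] {δR : J → Derivation k R R} {δ : J → Derivation k K K}
    (hδ : ∀ j x, δ j (algebraMap R K x) = algebraMap R K (δR j x))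
    (hconst : ∀ a b : R, b ≠ 0 → (∀ j, δR j a * b = a * δR j b) →
      ∃ c : k, a = algebraMap k R c * b)
    {x : K} (hx : ∀ j, δ j x = 0) : ∃ c : k, x = algebraMap k K c := by
  have hinj : Function.Injective (algebraMap R K) := IsFractionRing.injective R K
  have : Nontrivial R := (algebraMap R K).domain_nontrivial
  obtain ⟨a, b, hb, rfl⟩ := IsFractionRing.div_surjective (A := R) x
  have hbK : algebraMap R K b ≠ 0 := IsFractionRing.to_map_ne_zero_of_mem_nonZeroDivisors hb
  obtain ⟨c, rfl⟩ := hconst a b (nonZeroDivisors.ne_zero hb) fun j => hinj <| by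
    have h := congrArg (δ j) (div_mul_cancel₀ (algebraMap R K a) hbK)
    rw [Derivation.leibniz, hx, smul_zero, add_zero, smul_eq_mul, hδ, hδ] at h
    rw [map_mul, map_mul, ← h, mul_right_comm, div_mul_cancel₀ _ hbK]
  exact ⟨c, by rw [map_mul, mul_div_cancel_right₀ _ hbK, ← IsScalarTower.algebraMap_apply]⟩

end Constants

section DifferentialPrimes

variable {k J R : Type*} [Field k] [CharZero k] {n : ℕ} [CommRing R] [IsDomain R] [Algebra k R]
  [Algebra (MvPolynomial (Fin n) k) R] [Module.Finite (MvPolynomial (Fin n) k) R]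
  [FaithfulSMul (MvPolynomial (Fin n) k) R] [Finite J] {δR : J → Derivation k R R}

theorem exists_forall_isSimplePoleForm {K : Type*} [Field K] [Algebra k K]
    [Algebra (MvPolynomial (Fin n) k) K] [Algebra R K] [IsScalarTower k (MvPolynomial (Fin n) k) K]
    [IsScalarTower (MvPolynomial (Fin n) k) R K] [IsFractionRing R K]
    {δ : J → Derivation k K K} (hδ : ∀ j x, δ j (algebraMap R K x) = algebraMap R K (δR j x)) :
    ∃ (d : Fin n → Derivation k K K) (z : K) (D : MvPolynomial (Fin n) k) (N : ℕ), D ≠ 0 ∧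
      ∀ (P : Ideal R) [P.IsPrime], (∀ j, ∀ x ∈ P, δR j x ∈ P) → algebraMap _ R D ∉ P →
        ∀ {f : MvPolynomial (Fin n) k} (hf : Prime f),
          P.under (MvPolynomial (Fin n) k) = Ideal.span {f} →
            ∃ x, IsSimplePoleForm d δ z D N hf x := by
  let A := MvPolynomial (Fin n) k
  let L := FractionRing A
  have : FaithfulSMul A K := (faithfulSMul_iff_algebraMap_injective A K).2 <| by
    rw [IsScalarTower.algebraMap_eq A R K]
    exact (IsFractionRing.injective R K).comp (FaithfulSMul.algebraMap_injective A R)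
  let : Algebra L K := FractionRing.liftAlgebra A K
  have : IsScalarTower A L K := FractionRing.isScalarTower_liftAlgebra A K
  have : CharZero L := charZero_of_injective_algebraMap (algebraMap k L).injective
  have : FiniteDimensional L K := .of_isLocalization A R (nonZeroDivisors A)
  have : Algebra.FormallyEtale A K := formallyEtale_of_isFractionRing (L := L)
  obtain ⟨z, htop⟩ := exists_adjoin_algebraMap_eq_top (A := A) (R := R) (L := L) (K := K)
  have hz : IsIntegral A z := Algebra.IsIntegral.isIntegral z
  choose d hd using fun l : Fin n =>
    exists_derivation_algebraMap_eq (T := K) (MvPolynomial.pderiv (R := k) l)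
  obtain ⟨D, N, h⟩ := exists_isCommonDenominator (R := R) d δ hz.algebraMap htop
    (aeval (algebraMap R K z) (derivative (minpoly A z)))⁻¹
  obtain ⟨e, he⟩ := exists_totalDegree_le_coeff_of_isIntegral (k := k) (σ := Fin n)
    (minpolyDiv A z)
  have hv : aeval (algebraMap R K z) (derivative (minpoly A z)) ≠ 0 := by
    rw [← minpoly.algebraMap_eq (IsFractionRing.injective R K)]
    exact aeval_derivative_minpoly_ne_zero hz.algebraMap
  exact ⟨d, algebraMap R K z, D, e + N, h.ne_zero, fun P _ hP hDP f hf hfP =>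
    h.exists_isSimplePoleForm hz hd hδ (inv_mul_cancel₀ hv) he hP hf hfP hDP⟩

theorem finite_setOf_height_eq_one_and_differential
    [IsScalarTower k (MvPolynomial (Fin n) k) R]
    (hconst : ∀ a b : R, b ≠ 0 → (∀ j, δR j a * b = a * δR j b) →
      ∃ c : k, a = algebraMap k R c * b) :
    {P : PrimeSpectrum R |
      P.asIdeal.height = 1 ∧ ∀ j, ∀ x ∈ P.asIdeal, δR j x ∈ P.asIdeal}.Finite := by
  let A := MvPolynomial (Fin n) k
  let K := FractionRing R
  have : IsNoetherianRing R := .of_finite A R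
  have : Algebra.FormallyEtale R K := .of_isLocalization (nonZeroDivisors R)
  have : FaithfulSMul A K := .trans A R K
  choose δ hδ using fun j => exists_derivation_algebraMap_eq (T := K) (δR j)
  obtain ⟨d, z, D, N, hD, hform⟩ := exists_forall_isSimplePoleForm (n := n) hδ
  let S := {P : PrimeSpectrum R |
    P.asIdeal.height = 1 ∧ ∀ j, ∀ x ∈ P.asIdeal, δR j x ∈ P.asIdeal}
  let T := {P | P ∈ S ∧ algebraMap A R D ∉ P.asIdeal}
  suffices hT : ((fun P : PrimeSpectrum R => P.asIdeal.under A) '' T).Finite by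
    refine ((finite_of_finite_image_under (fun P hP => hP.1.1) hT).union
      (finite_setOf_height_eq_one_and_mem
        ((FaithfulSMul.algebraMap_eq_zero_iff A R).not.2 hD))).subset fun P hP => ?_
    exact (em (algebraMap A R D ∈ P.asIdeal)).elim (fun h => .inr ⟨hP.1, h⟩)
      fun h => .inl ⟨hP, h⟩
  refine Set.finite_coe_iff.1 ?_
  choose P hPT hP using fun t : (fun P : PrimeSpectrum R => P.asIdeal.under A) '' T => t.2
  choose f hf hfP using fun t => exists_prime_under_eq_span_singleton (A := A) (hPT t).1.1
  choose x hx using fun t => hform (P t).asIdeal (hPT t).1.2 (hPT t).2 (hf t) (hfP t)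
  refine IsSimplePoleForm.finite
    (fun _ => exists_eq_algebraMap_of_forall_derivation_eq_zero hδ hconst) hx hD
    (fun t hdvd => (hPT t).2 ?_) fun s t hts hdvd => hts (Subtype.ext ?_)
  · exact Ideal.mem_comap.1 ((hfP t).ge (Ideal.mem_span_singleton.2 hdvd))
  · rw [← hP s, ← hP t]
    exact ((hfP t).trans (Ideal.span_singleton_eq_span_singleton.2
      ((hf s).irreducible.associated_of_dvd (hf t).irreducible hdvd).symm)).trans (hfP s).symm

end DifferentialPrimes

section FiniteType

theorem exists_finset_span_image_eq {R M ι : Type*} [Semiring R] [AddCommMonoid M] [Module R M]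
    [IsNoetherian R M] (v : ι → M) :
    ∃ s : Finset ι, Submodule.span R (v '' s) = Submodule.span R (Set.range v) := by
  classical
  obtain ⟨t, ht, hspan⟩ := (Submodule.fg_span_iff_fg_span_finset_subset _).1
    (IsNoetherian.noetherian (Submodule.span R (Set.range v)))
  rw [← Set.image_univ, Finset.subset_set_image_iff] at ht
  obtain ⟨s, -, rfl⟩ := ht
  exact ⟨s, by rw [hspan, Finset.coe_image]⟩

variable {k R : Type*} [CommRing k] [CommRing R] [Algebra k R]

theorem isNoetherian_derivation [IsNoetherianRing R]
    [Algebra.FiniteType k R] : IsNoetherian R (Derivation k R R) :=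
  isNoetherian_of_linearEquiv (KaehlerDifferential.linearMapEquivDerivation k R)

theorem derivation_mul_eq_of_mem_span {S : Set (Derivation k R R)}
    {a b : R} (hS : ∀ d ∈ S, d a * b = a * d b) {d : Derivation k R R}
    (hd : d ∈ Submodule.span R S) : d a * b = a * d b := by
  induction hd using Submodule.span_induction with
  | mem d hd => exact hS d hd
  | zero => simp
  | add d₁ d₂ _ _ h₁ h₂ => simp only [Derivation.add_apply, add_mul, mul_add, h₁, h₂]
  | smul r d _ h => simp only [Derivation.smul_apply, smul_eq_mul, mul_assoc, h, mul_left_comm]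

end FiniteType

end DifferentialPrime

theorem exists_nonconstant_rational_constant_of_infinite_height_one_differential_primes_general
    {k R J : Type*} [Field k] [CharZero k] [CommRing R] [IsDomain R] [Algebra k R]
    [Algebra.FiniteType k R] (δ : J → Derivation k R R)
    (hinf : {P : PrimeSpectrum R |
        Order.height P = 1 ∧ ∀ i, ∀ x ∈ P.asIdeal, δ i x ∈ P.asIdeal}.Infinite) :
    ∃ a b : R, b ≠ 0 ∧ (∀ i, δ i a * b = a * δ i b) ∧
      ¬∃ c : k, a = algebraMap k R c * b := by
  by_contra! hconst
  obtain ⟨n, φ, hφ, hfinite⟩ := exists_finite_inj_algHom_of_fg k R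
  let : Algebra (MvPolynomial (Fin n) k) R := φ.toRingHom.toAlgebra
  have : IsScalarTower k (MvPolynomial (Fin n) k) R :=
    .of_algebraMap_eq fun x => (φ.commutes x).symm
  have : Module.Finite (MvPolynomial (Fin n) k) R := hfinite
  have : FaithfulSMul (MvPolynomial (Fin n) k) R :=
    (faithfulSMul_iff_algebraMap_injective _ _).2 hφ
  have : IsNoetherianRing R := .of_finite (MvPolynomial (Fin n) k) R
  have : IsNoetherian R (Derivation k R R) := DifferentialPrime.isNoetherian_derivation
  obtain ⟨s, hs⟩ := DifferentialPrime.exists_finset_span_image_eq (R := R) δ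
  refine hinf ((DifferentialPrime.finite_setOf_height_eq_one_and_differential (n := n)
    (δR := fun j : s => δ j) fun a b hb hab => hconst a b hb fun j => ?_).subset
      fun P hP => ⟨P.height_eq_orderHeight.trans hP.1, fun j => hP.2 j⟩)
  exact DifferentialPrime.derivation_mul_eq_of_mem_span
    (Set.forall_mem_image.2 fun i hi => hab ⟨i, hi⟩) (hs.ge (Submodule.subset_span ⟨j, rfl⟩))

/-- **Bell–Launois–León Sánchez–Moosa / Freitag–Moosa** (Corollary 4.5):
Let `R` be an integral domain that is a finitely generated `ℂ`-algebra,
equipped with `ℂ`-linear derivations `δ₁, …, δ_m : R → R`.  If there are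
infinitely many height one prime differential ideals of `R`, then there are
`a, b ∈ R`, `b ≠ 0`, with `δᵢ(a)·b = a·δᵢ(b)` for all `i` and such that
`a` is not a `ℂ`-multiple of `b`; that is, the quotient `f = a/b` in
`Frac(R)` lies outside `ℂ` and is a constant for all the (extended)
derivations. -/
theorem exists_nonconstant_rational_constant_of_infinite_height_one_differential_primes
    {R : Type*} [CommRing R] [IsDomain R] [Algebra ℂ R]
    (hfg : Algebra.FiniteType ℂ R)
    (m : ℕ) (δ : Fin m → Derivation ℂ R R)
    (hinf : {P : PrimeSpectrum R |
        Order.height P = 1 ∧ ∀ i, ∀ x ∈ P.asIdeal, δ i x ∈ P.asIdeal}.Infinite) :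
    ∃ a b : R, b ≠ 0 ∧ (∀ i, δ i a * b = a * δ i b) ∧
      ¬∃ c : ℂ, a = algebraMap ℂ R c * b :=
  exists_nonconstant_rational_constant_of_infinite_height_one_differential_primes_general δ hinf
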